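/- arXiv:0805.0582 — 3 statements merged into one kernel-verified Lean document; each statement's English description precedes it below -/
import Mathlib

section
/- (Perturbation Lemma, homotopy equivalence form.) Let (Y, ∂) and (X, d) be chain complexes of k-modules, let i : (Y, ∂) → (X, d) and p : (X, d) → (Y, ∂) be chain maps that are quasi-isomorphisms, and let h : X_* → X_{*+1} be a homotopy from i∘p to the identity, i.e. d∘h + h∘d = i∘p − id. Let δ : X_* → X_{*-1} be a small perturbation: (d + δ)∘(d + δ) = 0 and id − δ∘h is invertible in each degree. Set A = (id − δ∘h)^{-1}∘δ, ∂¹ = ∂ + p∘A∘i, i¹ = i + h∘A∘i, p¹ = p + p∘A∘h, and h¹ = h + h∘A∘h. Then (Y, ∂¹) is a chain complex (∂¹∘∂¹ = 0), the maps i¹ : (Y, ∂¹) → (X, d + δ) and p¹ : (X, d + δ) → (Y, ∂¹) are chain maps which are quasi-isomorphisms, and h¹ is a homotopy from i¹∘p¹ to the identity: (d + δ)∘h¹ + h¹∘(d + δ) = i¹∘p¹ − id. -/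
/-- Perturbation Lemma, homotopy equivalence form.  Given chain complexes
`(Y, dY)` and `(X, dX)` of `k`-modules, quasi-isomorphic chain maps `i, p` between them, a
homotopy `h` from `i∘p` to the identity, and a small perturbation `δ` of `dX`, the perturbed
data `dY¹ = dY + p∘A∘i`, `i¹ = i + h∘A∘i`, `p¹ = p + p∘A∘h`, `h¹ = h + h∘A∘h` (with
`A = (id - δ∘h)⁻¹∘δ`) again consists of: a chain complex `(Y, dY¹)`, chain maps `i¹, p¹`
which are quasi-isomorphisms, and a homotopy `h¹` from `i¹∘p¹` to the identity.

Degree conventions: differentials are given as `d n : X (n+1) →ₗ X n`, homotopies as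
`h n : X n →ₗ X (n+1)`; quasi-isomorphism is expressed elementwise on homology. -/
theorem perturbation_lemma_homotopy_equivalence
    (k : Type*) [CommRing k]
    (X Y : ℤ → Type*)
    [∀ m, AddCommGroup (X m)] [∀ m, Module k (X m)]
    [∀ m, AddCommGroup (Y m)] [∀ m, Module k (Y m)]
    (dX : ∀ m : ℤ, X (m + 1) →ₗ[k] X m) (dY : ∀ m : ℤ, Y (m + 1) →ₗ[k] Y m)
    (hdX : ∀ m, (dX m) ∘ₗ (dX (m + 1)) = 0) (hdY : ∀ m, (dY m) ∘ₗ (dY (m + 1)) = 0)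
    (i : ∀ m : ℤ, Y m →ₗ[k] X m) (p : ∀ m : ℤ, X m →ₗ[k] Y m)
    (hichain : ∀ m, (dX m) ∘ₗ (i (m + 1)) = (i m) ∘ₗ (dY m))
    (hpchain : ∀ m, (p m) ∘ₗ (dX m) = (dY m) ∘ₗ (p (m + 1)))
    -- `i` is a quasi-isomorphism (elementwise: surjective and injective on homology):
    (hiq1 : ∀ (m : ℤ) (x : X (m + 1)), dX m x = 0 →
      ∃ y : Y (m + 1), dY m y = 0 ∧ ∃ z : X (m + 1 + 1), x - i (m + 1) y = dX (m + 1) z)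
    (hiq2 : ∀ (m : ℤ) (y : Y (m + 1)), dY m y = 0 →
      (∃ z : X (m + 1 + 1), i (m + 1) y = dX (m + 1) z) →
        ∃ w : Y (m + 1 + 1), y = dY (m + 1) w)
    -- `p` is a quasi-isomorphism:
    (hpq1 : ∀ (m : ℤ) (y : Y (m + 1)), dY m y = 0 →
      ∃ x : X (m + 1), dX m x = 0 ∧ ∃ w : Y (m + 1 + 1), y - p (m + 1) x = dY (m + 1) w)
    (hpq2 : ∀ (m : ℤ) (x : X (m + 1)), dX m x = 0 →
      (∃ w : Y (m + 1 + 1), p (m + 1) x = dY (m + 1) w) →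
        ∃ z : X (m + 1 + 1), x = dX (m + 1) z)
    -- the homotopy `h` from `i ∘ p` to the identity:
    (h : ∀ m : ℤ, X m →ₗ[k] X (m + 1))
    (hhtpy : ∀ m : ℤ, (dX (m + 1)) ∘ₗ (h (m + 1)) + (h m) ∘ₗ (dX m) =
      (i (m + 1)) ∘ₗ (p (m + 1)) - LinearMap.id)
    -- the small perturbation `δ`:
    (δ : ∀ m : ℤ, X (m + 1) →ₗ[k] X m)
    (hδ : ∀ m, (dX m + δ m) ∘ₗ (dX (m + 1) + δ (m + 1)) = 0)
    (hsmall : ∀ m : ℤ, IsUnit ((1 : Module.End k (X m)) - (δ m) ∘ₗ (h m))) :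
    -- the perturbed data:
    let a : ∀ m : ℤ, X (m + 1) →ₗ[k] X m := fun m =>
      (Ring.inverse ((1 : Module.End k (X m)) - (δ m) ∘ₗ (h m))) ∘ₗ (δ m)
    let dY1 : ∀ m : ℤ, Y (m + 1) →ₗ[k] Y m := fun m =>
      dY m + (p m) ∘ₗ (a m) ∘ₗ (i (m + 1))
    let i1 : ∀ m : ℤ, Y (m + 1) →ₗ[k] X (m + 1) := fun m =>
      i (m + 1) + (h m) ∘ₗ (a m) ∘ₗ (i (m + 1))
    let p1 : ∀ m : ℤ, X m →ₗ[k] Y m := fun m =>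
      p m + (p m) ∘ₗ (a m) ∘ₗ (h m)
    let h1 : ∀ m : ℤ, X m →ₗ[k] X (m + 1) := fun m =>
      h m + (h m) ∘ₗ (a m) ∘ₗ (h m)
    -- `(Y, dY¹)` is a chain complex:
    (∀ m, (dY1 m) ∘ₗ (dY1 (m + 1)) = 0) ∧
    -- `i¹` and `p¹` are chain maps to and from `(X, dX + δ)`:
    (∀ m, (dX (m + 1) + δ (m + 1)) ∘ₗ (i1 (m + 1)) = (i1 m) ∘ₗ (dY1 (m + 1))) ∧
    (∀ m, (p1 m) ∘ₗ (dX m + δ m) = (dY1 m) ∘ₗ (p1 (m + 1))) ∧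
    -- `h¹` is a homotopy from `i¹ ∘ p¹` to the identity:
    (∀ m : ℤ, (dX (m + 1) + δ (m + 1)) ∘ₗ (h1 (m + 1)) + (h1 m) ∘ₗ (dX m + δ m) =
      (i1 m) ∘ₗ (p1 (m + 1)) - LinearMap.id) ∧
    -- `i¹` is a quasi-isomorphism:
    (∀ (m : ℤ) (x : X (m + 1)), (dX m + δ m) x = 0 →
      ∃ y : Y (m + 1), dY1 m y = 0 ∧
        ∃ z : X (m + 1 + 1), x - i1 m y = (dX (m + 1) + δ (m + 1)) z) ∧
    (∀ (m : ℤ) (y : Y (m + 1)), dY1 m y = 0 →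
      (∃ z : X (m + 1 + 1), i1 m y = (dX (m + 1) + δ (m + 1)) z) →
        ∃ w : Y (m + 1 + 1), y = dY1 (m + 1) w) ∧
    -- `p¹` is a quasi-isomorphism:
    (∀ (m : ℤ) (y : Y (m + 1)), dY1 m y = 0 →
      ∃ x : X (m + 1), (dX m + δ m) x = 0 ∧
        ∃ w : Y (m + 1 + 1), y - p1 (m + 1) x = dY1 (m + 1) w) ∧
    (∀ (m : ℤ) (x : X (m + 1)), (dX m + δ m) x = 0 →
      (∃ w : Y (m + 1 + 1), p1 (m + 1) x = dY1 (m + 1) w) →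
        ∃ z : X (m + 1 + 1), x = (dX (m + 1) + δ (m + 1)) z) := by
  intro a dY1 i1 p1 h1
  have hI : ∀ m x, dX m (i (m + 1) x) = i m (dY m x) := fun m x =>
    LinearMap.congr_fun (hichain m) x
  have hP : ∀ m x, dY m (p (m + 1) x) = p m (dX m x) := fun m x =>
    (LinearMap.congr_fun (hpchain m) x).symm
  have hYY : ∀ m x, dY m (dY (m + 1) x) = 0 := fun m x => LinearMap.congr_fun (hdY m) x
  have hXX : ∀ m x, dX m (dX (m + 1) x) = 0 := fun m x => LinearMap.congr_fun (hdX m) x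
  have hH : ∀ m x, i (m + 1) (p (m + 1) x) =
      x + dX (m + 1) (h (m + 1) x) + h m (dX m x) := by
    intro m x
    have e := LinearMap.congr_fun (hhtpy m) x
    simp only [LinearMap.add_apply, LinearMap.comp_apply, LinearMap.sub_apply,
      LinearMap.id_apply] at e
    rw [add_assoc, e]; abel
  have hD : ∀ m x, δ m (dX (m + 1) x) =
      - dX m (δ (m + 1) x) - δ m (δ (m + 1) x) := by
    intro m x
    have e := LinearMap.congr_fun (hδ m) x
    simp only [LinearMap.add_apply, LinearMap.comp_apply, map_add, hXX,
      LinearMap.zero_apply] at e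
    rw [← sub_eq_zero, ← e]; abel
  -- the two recursions for `a`
  have hA1 : ∀ m x, δ m (h m (a m x)) = a m x - δ m x := by
    intro m x
    have e := LinearMap.congr_fun (Ring.mul_inverse_cancel _ (hsmall m)) (δ m x)
    simp only [Module.End.mul_apply, LinearMap.sub_apply, LinearMap.comp_apply,
      Module.End.one_apply] at e
    change a m x - δ m (h m (a m x)) = δ m x at e
    rw [← e]; abel
  have hA2 : ∀ m x, a m (h m (δ m x)) = a m x - δ m x := by
    intro m x
    have e := LinearMap.congr_fun (Ring.inverse_mul_cancel _ (hsmall m)) (δ m x)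
    simp only [Module.End.mul_apply, LinearMap.sub_apply, LinearMap.comp_apply,
      Module.End.one_apply, map_sub] at e
    change a m x - a m (h m (δ m x)) = δ m x at e
    have e' := sub_sub_cancel (a m x) (a m (h m (δ m x)))
    rw [e] at e'
    exact e'.symm
  have hinj : ∀ m x, x - δ m (h m x) = 0 → x = 0 := by
    intro m x hx
    have e := LinearMap.congr_fun (Ring.inverse_mul_cancel _ (hsmall m)) x
    rw [Module.End.mul_apply] at e
    simp only [LinearMap.sub_apply, LinearMap.comp_apply, Module.End.one_apply] at e
    rw [hx, map_zero] at e
    exact e.symm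
  -- key identity
  have hK : ∀ m x, a m (i (m + 1) (p (m + 1) (a (m + 1) x))) =
      - a m (dX (m + 1) x) - dX m (a (m + 1) x) := by
    intro m x
    rw [← sub_eq_zero]
    apply hinj
    have e1 := hA1 m (i (m + 1) (p (m + 1) (a (m + 1) x)))
    have e2 := hA1 m (dX (m + 1) x)
    have e3 := congrArg (δ m) (hH m (a (m + 1) x))
    have e4 := hD m (h (m + 1) (a (m + 1) x))
    have e5 := congrArg (dX m) (hA1 (m + 1) x)
    have e6 := congrArg (δ m) (hA1 (m + 1) x)
    have e7 := hD m x
    simp only [map_add, map_sub, map_neg] at *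
    grind
  have c1 : ∀ m x, dY1 m x = dY m x + p m (a m (i (m + 1) x)) := fun m x => rfl
  have c2 : ∀ m x, i1 m x = i (m + 1) x + h m (a m (i (m + 1) x)) := fun m x => rfl
  have c3 : ∀ m x, p1 m x = p m x + p m (a m (h m x)) := fun m x => rfl
  have c4 : ∀ m x, h1 m x = h m x + h m (a m (h m x)) := fun m x => rfl
  clear_value a dY1 i1 p1 h1
  have r1 : ∀ m x, dY1 m (dY1 (m + 1) x) = 0 := by
    intro m x
    simp only [c1, map_add, hYY, hP, hK, ← hI, map_sub, map_neg]
    abel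
  have r2 : ∀ m x, (dX (m + 1) + δ (m + 1)) (i1 (m + 1) x) = i1 m (dY1 (m + 1) x) := by
    intro m x
    simp only [LinearMap.add_apply, c1, c2, map_add, hK, ← hI, map_sub, map_neg, hA1]
    rw [hH]
    abel
  have r3 : ∀ m x, p1 m ((dX m + δ m) x) = dY1 m (p1 (m + 1) x) := by
    intro m x
    simp only [LinearMap.add_apply, c1, c3, map_add, hP, hK, map_sub, map_neg, hA2]
    rw [hH]
    simp only [map_add]
    abel
  have r4 : ∀ m x, (dX (m + 1) + δ (m + 1)) (h1 (m + 1) x) + h1 m ((dX m + δ m) x) =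
      i1 m (p1 (m + 1) x) - x := by
    intro m x
    simp only [LinearMap.add_apply, c2, c3, c4, map_add, hK, map_sub, map_neg, hA1, hA2]
    rw [hH, hH]
    simp only [map_add]
    abel
  have r5 : ∀ (m : ℤ) (y : Y (m + 1)), dY1 m y = 0 →
      (∃ z : X (m + 1 + 1), i1 m y = (dX (m + 1) + δ (m + 1)) z) →
        ∃ w : Y (m + 1 + 1), y = dY1 (m + 1) w := by
    rintro m y hy ⟨z, hz⟩
    obtain ⟨u, hu⟩ : ∃ u, u = z - h (m + 1) (δ (m + 1) z) := ⟨_, rfl⟩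
    have hau : a (m + 1) u = δ (m + 1) z := by rw [hu, map_sub, hA2]; abel
    -- apply `1 - hδ` to `hz`
    have hiy : i (m + 1) y = dX (m + 1) u + i (m + 1) (p (m + 1) (a (m + 1) u)) := by
      have e0 := congrArg (fun t => t - h m (δ m t)) hz
      simp only [c2, LinearMap.add_apply, map_add, hA1, map_sub, map_neg, hD] at e0
      rw [hau, hH, hu, map_sub]
      grind
    obtain ⟨w, hw⟩ := hiq2 m (y - p (m + 1) (a (m + 1) u)) (by
      rw [map_sub, hP]
      rw [c1, hiy, map_add, hK] at hy
      simp only [map_add, map_sub, map_neg] at hy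
      rw [← hy]; abel) ⟨u, by rw [map_sub, hiy]; abel⟩
    have hc : dX (m + 1) (u - i (m + 1 + 1) w) = 0 := by
      rw [map_sub, hI, ← hw, map_sub, hiy]; abel
    obtain ⟨y1, hy1, t, ht⟩ := hiq1 (m + 1) _ hc
    refine ⟨w + y1 - p (m + 1 + 1) (a (m + 1 + 1) t), ?_⟩
    have hu2 : u = i (m + 1 + 1) w + i (m + 1 + 1) y1 + dX (m + 1 + 1) t := by
      rw [← ht]; abel
    have hy2 : y = dY (m + 1) w + p (m + 1) (a (m + 1) u) := by rw [← hw]; abel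
    rw [hy2, hu2]
    simp only [c1, map_sub, map_add, hP, hK, hy1, map_neg]
    abel
  have r6 : ∀ (m : ℤ) (x : X (m + 1)), (dX m + δ m) x = 0 →
      i1 m (p1 (m + 1) x) - x = (dX (m + 1) + δ (m + 1)) (h1 (m + 1) x) := by
    intro m x hx
    rw [← r4, hx, map_zero, add_zero]
  -- `i1 m y` is a cycle if `y` is; checked directly since `i1` is indexed with a shift
  have r7 : ∀ (m : ℤ) (y : Y (m + 1)), dY1 m y = 0 → (dX m + δ m) (i1 m y) = 0 := by
    intro m y hy
    obtain ⟨n, rfl⟩ : ∃ n, m = n + 1 := ⟨m - 1, by ring⟩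
    rw [r2, hy, map_zero]
  have r8 : ∀ (m : ℤ) (x : X (m + 1)), (dX m + δ m) x = 0 → dY1 m (p1 (m + 1) x) = 0 := by
    intro m x hx
    rw [← r3, hx, map_zero]
  refine ⟨fun m => LinearMap.ext (r1 m), fun m => LinearMap.ext (r2 m),
    fun m => LinearMap.ext (r3 m), fun m => LinearMap.ext (r4 m), ?_, r5, ?_, ?_⟩
  · intro m x hx
    refine ⟨p1 (m + 1) x, r8 m x hx, - h1 (m + 1) x, ?_⟩
    rw [map_neg, ← r6 m x hx]; abel
  · intro m y hy
    refine ⟨i1 m y, r7 m y hy, r5 m _ ?_ ⟨- h1 (m + 1) (i1 m y), ?_⟩⟩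
    · rw [map_sub, hy, r8 m _ (r7 m y hy), sub_zero]
    · rw [map_neg, ← r6 m _ (r7 m y hy), map_sub]; abel
  · rintro m x hx ⟨w, hw⟩
    refine ⟨i1 (m + 1) w - h1 (m + 1) x, ?_⟩
    rw [map_sub, r2, ← hw, ← r6 m x hx]; abel
end

section
/- (Perturbation Lemma, special deformation retract form.) Let (Y, ∂), (X, d), i, p, h be a homotopy equivalence data which is a special deformation retract: p∘i = id, h∘i = 0, p∘h = 0, and h∘h = 0. Let δ be a small perturbation ((d + δ)² = 0 and id − δ∘h invertible in each degree), and set A = (id − δ∘h)^{-1}∘δ, ∂¹ = ∂ + p∘A∘i, i¹ = i + h∘A∘i, p¹ = p + p∘A∘h, h¹ = h + h∘A∘h. Then the perturbed data ((Y, ∂¹), (X, d + δ), i¹, p¹, h¹) is again a special deformation retract: i¹, p¹ are chain maps, (d + δ)∘h¹ + h¹∘(d + δ) = i¹∘p¹ − id, p¹∘i¹ = id, h¹∘i¹ = 0, p¹∘h¹ = 0, and h¹∘h¹ = 0. -/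
/-- Perturbation Lemma, special deformation retract form.  If the homotopy
equivalence data `((Y, dY), (X, dX), i, p, h)` is a special deformation retract
(`p∘i = id`, `h∘i = 0`, `p∘h = 0`, `h∘h = 0`) and `δ` is a small perturbation, then the
perturbed data `((Y, dY¹), (X, dX + δ), i¹, p¹, h¹)` is again a special deformation retract.

Degree conventions: differentials are given as `d n : X (n+1) →ₗ X n`, homotopies as
`h n : X n →ₗ X (n+1)`; quasi-isomorphism is expressed elementwise on homology. -/
theorem perturbation_lemma_special_deformation_retract
    (k : Type*) [CommRing k]
    (X Y : ℤ → Type*)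
    [∀ m, AddCommGroup (X m)] [∀ m, Module k (X m)]
    [∀ m, AddCommGroup (Y m)] [∀ m, Module k (Y m)]
    (dX : ∀ m : ℤ, X (m + 1) →ₗ[k] X m) (dY : ∀ m : ℤ, Y (m + 1) →ₗ[k] Y m)
    (hdX : ∀ m, (dX m) ∘ₗ (dX (m + 1)) = 0) (hdY : ∀ m, (dY m) ∘ₗ (dY (m + 1)) = 0)
    (i : ∀ m : ℤ, Y m →ₗ[k] X m) (p : ∀ m : ℤ, X m →ₗ[k] Y m)
    (hichain : ∀ m, (dX m) ∘ₗ (i (m + 1)) = (i m) ∘ₗ (dY m))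
    (hpchain : ∀ m, (p m) ∘ₗ (dX m) = (dY m) ∘ₗ (p (m + 1)))
    -- `i` is a quasi-isomorphism (elementwise on homology):
    (hiq1 : ∀ (m : ℤ) (x : X (m + 1)), dX m x = 0 →
      ∃ y : Y (m + 1), dY m y = 0 ∧ ∃ z : X (m + 1 + 1), x - i (m + 1) y = dX (m + 1) z)
    (hiq2 : ∀ (m : ℤ) (y : Y (m + 1)), dY m y = 0 →
      (∃ z : X (m + 1 + 1), i (m + 1) y = dX (m + 1) z) →
        ∃ w : Y (m + 1 + 1), y = dY (m + 1) w)
    -- `p` is a quasi-isomorphism: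
    (hpq1 : ∀ (m : ℤ) (y : Y (m + 1)), dY m y = 0 →
      ∃ x : X (m + 1), dX m x = 0 ∧ ∃ w : Y (m + 1 + 1), y - p (m + 1) x = dY (m + 1) w)
    (hpq2 : ∀ (m : ℤ) (x : X (m + 1)), dX m x = 0 →
      (∃ w : Y (m + 1 + 1), p (m + 1) x = dY (m + 1) w) →
        ∃ z : X (m + 1 + 1), x = dX (m + 1) z)
    -- the homotopy `h` from `i ∘ p` to the identity:
    (h : ∀ m : ℤ, X m →ₗ[k] X (m + 1))
    (hhtpy : ∀ m : ℤ, (dX (m + 1)) ∘ₗ (h (m + 1)) + (h m) ∘ₗ (dX m) =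
      (i (m + 1)) ∘ₗ (p (m + 1)) - LinearMap.id)
    -- special deformation retract conditions:
    (hpi : ∀ m, (p m) ∘ₗ (i m) = LinearMap.id)
    (hhi : ∀ m, (h m) ∘ₗ (i m) = 0)
    (hph : ∀ m, (p (m + 1)) ∘ₗ (h m) = 0)
    (hhh : ∀ m, (h (m + 1)) ∘ₗ (h m) = 0)
    -- the small perturbation `δ`:
    (δ : ∀ m : ℤ, X (m + 1) →ₗ[k] X m)
    (hδ : ∀ m, (dX m + δ m) ∘ₗ (dX (m + 1) + δ (m + 1)) = 0)
    (hsmall : ∀ m : ℤ, IsUnit ((1 : Module.End k (X m)) - (δ m) ∘ₗ (h m))) :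
    -- the perturbed data:
    let a : ∀ m : ℤ, X (m + 1) →ₗ[k] X m := fun m =>
      (Ring.inverse ((1 : Module.End k (X m)) - (δ m) ∘ₗ (h m))) ∘ₗ (δ m)
    let dY1 : ∀ m : ℤ, Y (m + 1) →ₗ[k] Y m := fun m =>
      dY m + (p m) ∘ₗ (a m) ∘ₗ (i (m + 1))
    let i1 : ∀ m : ℤ, Y (m + 1) →ₗ[k] X (m + 1) := fun m =>
      i (m + 1) + (h m) ∘ₗ (a m) ∘ₗ (i (m + 1))
    let p1 : ∀ m : ℤ, X m →ₗ[k] Y m := fun m =>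
      p m + (p m) ∘ₗ (a m) ∘ₗ (h m)
    let h1 : ∀ m : ℤ, X m →ₗ[k] X (m + 1) := fun m =>
      h m + (h m) ∘ₗ (a m) ∘ₗ (h m)
    -- `(Y, dY¹)` is a chain complex and `i¹`, `p¹` are chain maps:
    (∀ m, (dY1 m) ∘ₗ (dY1 (m + 1)) = 0) ∧
    (∀ m, (dX (m + 1) + δ (m + 1)) ∘ₗ (i1 (m + 1)) = (i1 m) ∘ₗ (dY1 (m + 1))) ∧
    (∀ m, (p1 m) ∘ₗ (dX m + δ m) = (dY1 m) ∘ₗ (p1 (m + 1))) ∧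
    -- `h¹` is a homotopy from `i¹ ∘ p¹` to the identity:
    (∀ m : ℤ, (dX (m + 1) + δ (m + 1)) ∘ₗ (h1 (m + 1)) + (h1 m) ∘ₗ (dX m + δ m) =
      (i1 m) ∘ₗ (p1 (m + 1)) - LinearMap.id) ∧
    -- the perturbed data is again a special deformation retract:
    (∀ m, (p1 (m + 1)) ∘ₗ (i1 m) = LinearMap.id) ∧
    (∀ m, (h1 (m + 1)) ∘ₗ (i1 m) = 0) ∧
    (∀ m, (p1 (m + 1)) ∘ₗ (h1 m) = 0) ∧
    (∀ m, (h1 (m + 1)) ∘ₗ (h1 m) = 0) := by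
  intro a dY1 i1 p1 h1
  have ha1 : ∀ m x, δ m (h m (a m x)) = a m x - δ m x := by
    intro m x
    have e := Ring.mul_inverse_cancel _ (hsmall m)
    have e' := LinearMap.congr_fun e (δ m x)
    simp only [Module.End.mul_apply, LinearMap.sub_apply, Module.End.one_apply,
      LinearMap.comp_apply] at e'
    simp only [a, LinearMap.comp_apply]
    rw [← sub_eq_iff_eq_add.mpr (sub_eq_iff_eq_add'.mp e')]
  have ha2 : ∀ m x, a m (h m (δ m x)) = a m x - δ m x := by
    intro m x
    have e := Ring.inverse_mul_cancel _ (hsmall m)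
    have e' := LinearMap.congr_fun e (δ m x)
    simp only [Module.End.mul_apply, LinearMap.sub_apply, Module.End.one_apply,
      LinearMap.comp_apply, map_sub] at e'
    simp only [a, LinearMap.comp_apply]
    linear_combination (norm := module) - e'
  have ha3 : ∀ m x, δ m x = 0 → a m x = 0 := by
    intro m x hx
    simp [a, hx]
  have hinj : ∀ m x, x - δ m (h m x) = 0 → x = 0 := by
    intro m x hx
    have e := LinearMap.congr_fun (Ring.inverse_mul_cancel _ (hsmall m)) x
    simp only [Module.End.mul_apply, LinearMap.sub_apply, Module.End.one_apply,
      LinearMap.comp_apply, hx, map_zero] at e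
    exact e.symm
  clear_value a
  have qic : ∀ m x, i m (dY m x) = dX m (i (m+1) x) :=
    fun m x => (LinearMap.congr_fun (hichain m) x).symm
  have qpc : ∀ m x, dY m (p (m+1) x) = p m (dX m x) :=
    fun m x => (LinearMap.congr_fun (hpchain m) x).symm
  have qpi : ∀ m x, p m (i m x) = x := fun m x => LinearMap.congr_fun (hpi m) x
  have qhi : ∀ m x, h m (i m x) = 0 := fun m x => LinearMap.congr_fun (hhi m) x
  have qph : ∀ m x, p (m+1) (h m x) = 0 := fun m x => LinearMap.congr_fun (hph m) x
  have qhh : ∀ m x, h (m+1) (h m x) = 0 := fun m x => LinearMap.congr_fun (hhh m) x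
  have qdd : ∀ m x, dX m (dX (m+1) x) = 0 := fun m x => LinearMap.congr_fun (hdX m) x
  have qyy : ∀ m x, dY m (dY (m+1) x) = 0 := fun m x => LinearMap.congr_fun (hdY m) x
  have qdh : ∀ m x, dX (m+1) (h (m+1) x) = i (m+1) (p (m+1) x) - x - h m (dX m x) := by
    intro m x
    have e := LinearMap.congr_fun (hhtpy m) x
    simp only [LinearMap.add_apply, LinearMap.sub_apply, LinearMap.comp_apply,
      LinearMap.id_apply] at e
    rw [← e]; abel
  have qδ : ∀ m x, dX m (δ (m+1) x) = - δ m (dX (m+1) x) - δ m (δ (m+1) x) := by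
    intro m x
    have e := LinearMap.congr_fun (hδ m) x
    simp only [LinearMap.add_apply, LinearMap.comp_apply, LinearMap.zero_apply,
      map_add, qdd] at e
    linear_combination (norm := module) e
  have key : ∀ m x, dX m (a (m+1) x) =
      - a m (dX (m+1) x) - a m (i (m+1) (p (m+1) (a (m+1) x))) := by
    intro m x
    rw [← sub_eq_zero]
    apply hinj
    have e1 := qδ m (x + h (m+1) (a (m+1) x))
    simp only [map_add, map_sub, map_neg, ha1, qdh] at e1 ⊢
    linear_combination (norm := module) e1
  refine ⟨?_, ?_, ?_, ?_, ?_, ?_, ?_, ?_⟩ <;> intro m <;> ext x <;>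
    simp only [dY1, i1, p1, h1, LinearMap.add_apply, LinearMap.sub_apply, LinearMap.comp_apply,
      LinearMap.id_apply, LinearMap.zero_apply, map_add, map_sub, map_neg, map_zero,
      qic, qpc, qpi, qhi, qph, qhh, qyy, qdh, ha1, ha2, key, add_zero, zero_add] <;> try abel
end

section
/- Assume conditions (i)–(iii) hold and f is convolution invertible with inverse f^{-1}. Let Ā = A/k·1_A and consider the Hochschild complex (E ⊗_k Ā^{⊗*}, b) of A with coefficients in E = A #_f H, where A acts on E via a ↦ a#1 and b(x ⊗ ā_1 ⊗ ⋯ ⊗ ā_r) = x a_1 ⊗ ā_2 ⊗ ⋯ ⊗ ā_r + Σ_{i=1}^{r-1} (−1)^i x ⊗ ā_1 ⊗ ⋯ ⊗ (a_i a_{i+1})‾ ⊗ ⋯ ⊗ ā_r + (−1)^r a_r x ⊗ ā_1 ⊗ ⋯ ⊗ ā_{r-1}. For each h ∈ H the formula ϑ^h(x ⊗ ā_1 ⊗ ⋯ ⊗ ā_r) = γ(h^{(3)}) x γ^{-1}(h^{(1)}) ⊗ class of (a_1 ⊗ ⋯ ⊗ a_r)^{h^{(2)}}, where (a_1 ⊗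 ⋯ ⊗ a_r)^h = a_1^{h^{(1)}} ⊗ ⋯ ⊗ a_r^{h^{(r)}}, defines a well-defined k-linear map ϑ^h_r : E ⊗_k Ā^{⊗r} → E ⊗_k Ā^{⊗r} that is a morphism of complexes: b∘ϑ^h = ϑ^h∘b in every degree. -/
open TensorProduct

noncomputable section CrossedProduct

variable (k A H : Type*) [CommRing k] [Ring A] [Algebra k A] [Ring H] [HopfAlgebra k H]

/-- A chosen "Sweedler representation" of the comultiplication of `H`:
`comul h = ∑_{i < n h} c₁ h i ⊗ c₂ h i` for every `h`. -/
def IsSweedlerRep (n : H → ℕ) (c₁ c₂ : H → ℕ → H) : Prop :=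
  ∀ h : H, Coalgebra.comul (R := k) h = ∑ i ∈ Finset.range (n h), c₁ h i ⊗ₜ[k] c₂ h i

/-- `σ` is a weak action of `H` on `A`: `(ab)^h = a^{h⁽¹⁾} b^{h⁽²⁾}`, `1^h = ε(h)1`, `a^1 = a`. -/
def IsWeakAction (n : H → ℕ) (c₁ c₂ : H → ℕ → H) (σ : H →ₗ[k] A →ₗ[k] A) : Prop :=
  (∀ (h : H) (a b : A),
      σ h (a * b) = ∑ i ∈ Finset.range (n h), σ (c₁ h i) a * σ (c₂ h i) b) ∧
  (∀ h : H, σ h (1 : A) = Coalgebra.counit (R := k) h • (1 : A)) ∧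
  (∀ a : A, σ (1 : H) a = a)

/-- Condition (i): normality of the cocycle `f`. -/
def IsNormal (f : H →ₗ[k] H →ₗ[k] A) : Prop :=
  ∀ h : H, f h (1 : H) = Coalgebra.counit (R := k) h • (1 : A) ∧
    f (1 : H) h = Coalgebra.counit (R := k) h • (1 : A)

/-- Condition (ii): the cocycle condition
`f(l⁽¹⁾,m⁽¹⁾)^{h⁽¹⁾} f(h⁽²⁾, l⁽²⁾m⁽²⁾) = f(h⁽¹⁾,l⁽¹⁾) f(h⁽²⁾l⁽²⁾, m)`. -/
def IsCocycle (n : H → ℕ) (c₁ c₂ : H → ℕ → H) (σ : H →ₗ[k] A →ₗ[k] A)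
    (f : H →ₗ[k] H →ₗ[k] A) : Prop :=
  ∀ h l m : H,
    (∑ i ∈ Finset.range (n h), ∑ j ∈ Finset.range (n l), ∑ p ∈ Finset.range (n m),
      σ (c₁ h i) (f (c₁ l j) (c₁ m p)) * f (c₂ h i) (c₂ l j * c₂ m p)) =
    ∑ i ∈ Finset.range (n h), ∑ j ∈ Finset.range (n l),
      f (c₁ h i) (c₁ l j) * f (c₂ h i * c₂ l j) m

/-- Condition (iii): the twisted module condition
`(a^{l⁽¹⁾})^{h⁽¹⁾} f(h⁽²⁾,l⁽²⁾) = f(h⁽¹⁾,l⁽¹⁾) a^{h⁽²⁾l⁽²⁾}`. -/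
def IsTwistedModule (n : H → ℕ) (c₁ c₂ : H → ℕ → H) (σ : H →ₗ[k] A →ₗ[k] A)
    (f : H →ₗ[k] H →ₗ[k] A) : Prop :=
  ∀ (h l : H) (a : A),
    (∑ i ∈ Finset.range (n h), ∑ j ∈ Finset.range (n l),
      σ (c₁ h i) (σ (c₁ l j) a) * f (c₂ h i) (c₂ l j)) =
    ∑ i ∈ Finset.range (n h), ∑ j ∈ Finset.range (n l),
      f (c₁ h i) (c₁ l j) * σ (c₂ h i * c₂ l j) a

/-- `finv` is the convolution inverse of `f`:
`f(h⁽¹⁾,l⁽¹⁾) f⁻¹(h⁽²⁾,l⁽²⁾) = f⁻¹(h⁽¹⁾,l⁽¹⁾) f(h⁽²⁾,l⁽²⁾) = ε(h)ε(l)1_A`. -/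
def IsConvInverse (n : H → ℕ) (c₁ c₂ : H → ℕ → H) (f finv : H →ₗ[k] H →ₗ[k] A) : Prop :=
  ∀ h l : H,
    (∑ i ∈ Finset.range (n h), ∑ j ∈ Finset.range (n l),
        f (c₁ h i) (c₁ l j) * finv (c₂ h i) (c₂ l j) =
      (Coalgebra.counit (R := k) h * Coalgebra.counit (R := k) l) • (1 : A)) ∧
    (∑ i ∈ Finset.range (n h), ∑ j ∈ Finset.range (n l),
        finv (c₁ h i) (c₁ l j) * f (c₂ h i) (c₂ l j) =
      (Coalgebra.counit (R := k) h * Coalgebra.counit (R := k) l) • (1 : A))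

/-- The multiplication of `A #_f H` as a bilinear map on `A ⊗[k] H`:
`(a # h)(b # l) = a b^{h⁽¹⁾} f(h⁽²⁾, l⁽¹⁾) # h⁽³⁾ l⁽²⁾`. -/
def crossedMul (σ : H →ₗ[k] A →ₗ[k] A) (f : H →ₗ[k] H →ₗ[k] A) :
    (A ⊗[k] H) →ₗ[k] (A ⊗[k] H) →ₗ[k] (A ⊗[k] H) :=
  TensorProduct.lift
    (((LinearMap.llcomp k (A ⊗[k] H) (A ⊗[k] H) (A ⊗[k] H)).comp
        (TensorProduct.curry
          ((LinearMap.rTensor H (LinearMap.mul' k A)) ∘ₗ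
            (TensorProduct.assoc k A A H).symm.toLinearMap))).compl₂
      (TensorProduct.curry
        ((LinearMap.rTensor H (LinearMap.mul' k A)) ∘ₗ
         (TensorProduct.map
            (TensorProduct.map (TensorProduct.lift σ) (TensorProduct.lift f))
            (LinearMap.mul' k H)) ∘ₗ
         (LinearMap.rTensor (H ⊗[k] H)
            (TensorProduct.tensorTensorTensorComm k H H A H).toLinearMap) ∘ₗ
         (TensorProduct.tensorTensorTensorComm k (H ⊗[k] H) H (A ⊗[k] H) H).toLinearMap ∘ₗ
         (TensorProduct.map
            ((LinearMap.rTensor H (Coalgebra.comul (R := k))) ∘ₗ (Coalgebra.comul (R := k)))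
            ((TensorProduct.assoc k A H H).symm.toLinearMap ∘ₗ
              (LinearMap.lTensor A (Coalgebra.comul (R := k))))))))

/-- The unit `1 # 1` of the crossed product. -/
def oneE : A ⊗[k] H := (1 : A) ⊗ₜ[k] (1 : H)

/-- The map `γ : H → A #_f H`, `γ(h) = 1 # h`. -/
def gam : H →ₗ[k] A ⊗[k] H := TensorProduct.mk k A H 1

/-- The map `h ↦ f⁻¹(S(h⁽²⁾), h⁽³⁾) # S(h⁽¹⁾)`, the convolution inverse of `γ`. -/
def gammaInv (finv : H →ₗ[k] H →ₗ[k] A) : H →ₗ[k] A ⊗[k] H :=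
  (TensorProduct.comm k H A).toLinearMap ∘ₗ
    (TensorProduct.map (HopfAlgebra.antipode (R := k))
      ((TensorProduct.lift finv) ∘ₗ (LinearMap.rTensor H (HopfAlgebra.antipode (R := k))))) ∘ₗ
    (LinearMap.lTensor H (Coalgebra.comul (R := k))) ∘ₗ (Coalgebra.comul (R := k))

/-- The canonical coaction `ν = id_A ⊗ Δ : A #_f H → (A #_f H) ⊗ H`. -/
def nuE : (A ⊗[k] H) →ₗ[k] (A ⊗[k] H) ⊗[k] H :=
  (TensorProduct.assoc k A H H).symm.toLinearMap ∘ₗ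
    (LinearMap.lTensor A (Coalgebra.comul (R := k)))

/-- Convolution product on `Hom_k(H, A #_f H)`: `(u * v)(h) = u(h⁽¹⁾) v(h⁽²⁾)`. -/
def convMul (σ : H →ₗ[k] A →ₗ[k] A) (f : H →ₗ[k] H →ₗ[k] A)
    (u v : H →ₗ[k] A ⊗[k] H) : H →ₗ[k] A ⊗[k] H :=
  (TensorProduct.lift (crossedMul k A H σ f)) ∘ₗ (TensorProduct.map u v) ∘ₗ
    (Coalgebra.comul (R := k))

/-- The unit of the convolution algebra `Hom_k(H, A #_f H)`: `h ↦ ε(h) 1_E`. -/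
def convOne : H →ₗ[k] A ⊗[k] H :=
  (LinearMap.toSpanSingleton k (A ⊗[k] H) (oneE k A H)) ∘ₗ (Coalgebra.counit (R := k))

/-- Sum over iterated (right-nested) Sweedler components:
`swSum n c₁ c₂ r h F = ∑ F (h⁽¹⁾, …, h⁽ʳ⁺¹⁾)`. -/
def swSum {M : Type*} [AddCommMonoid M] (n : H → ℕ) (c₁ c₂ : H → ℕ → H) :
    (r : ℕ) → H → ((Fin (r + 1) → H) → M) → M
  | 0, h, F => F (fun _ => h)
  | (r + 1), h, F =>
      ∑ i ∈ Finset.range (n h), swSum n c₁ c₂ r (c₂ h i) (fun g => F (Fin.cons (c₁ h i) g))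

/-- The product of a list of elements of the crossed product. -/
def prodE (σ : H →ₗ[k] A →ₗ[k] A) (f : H →ₗ[k] H →ₗ[k] A) :
    List (A ⊗[k] H) → A ⊗[k] H
  | [] => oneE k A H
  | x :: L => crossedMul k A H σ f x (prodE σ f L)

end CrossedProduct
section Statement12

open PiTensorProduct

variable (k A H : Type*) [CommRing k] [Ring A] [Algebra k A] [Ring H] [HopfAlgebra k H]

/-- The modules `E ⊗ Ā^{⊗r}` of the Hochschild complex of `A` with coefficients in
`E = A #_f H`, where `Ā = A / k·1_A`. -/
abbrev HochM (r : ℕ) : Type _ :=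
  (A ⊗[k] H) ⊗[k] (⨂[k]^r (A ⧸ (Submodule.span k {(1 : A)})))

section Helpers

set_option linter.unusedSectionVars false

variable {k A H}
variable {M N P : Type*} [AddCommGroup M] [Module k M] [AddCommGroup N] [Module k N]
  [AddCommGroup P] [Module k P]

lemma lin_id : IsLinearMap k (fun x : M => x) := ⟨fun _ _ => rfl, fun _ _ => rfl⟩

lemma lin_map {f : M → N} (φ : N →ₗ[k] P) (hf : IsLinearMap k f) :
    IsLinearMap k (fun x => φ (f x)) :=
  ⟨fun x y => by rw [hf.map_add, map_add], fun c x => by rw [hf.map_smul, map_smul]⟩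

lemma lin_app {Q : Type*} [AddCommGroup Q] [Module k Q] {f : M → N} (φ : N →ₗ[k] P →ₗ[k] Q)
    (hf : IsLinearMap k f) (c : P) : IsLinearMap k (fun x => φ (f x) c) :=
  ⟨fun x y => by rw [hf.map_add, map_add, LinearMap.add_apply],
   fun c x => by rw [hf.map_smul, map_smul, LinearMap.smul_apply]⟩

lemma lin_mul_l {B : Type*} [Ring B] [Algebra k B] {f : M → B} (hf : IsLinearMap k f) (c : B) :
    IsLinearMap k (fun x => f x * c) :=
  ⟨fun x y => by rw [hf.map_add, add_mul], fun c x => by rw [hf.map_smul, smul_mul_assoc]⟩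

lemma lin_mul_r {B : Type*} [Ring B] [Algebra k B] {f : M → B} (hf : IsLinearMap k f) (c : B) :
    IsLinearMap k (fun x => c * f x) :=
  ⟨fun x y => by rw [hf.map_add, mul_add], fun c x => by rw [hf.map_smul, mul_smul_comm]⟩

lemma lin_tmul_l {f : M → N} (hf : IsLinearMap k f) (c : P) :
    IsLinearMap k (fun x => f x ⊗ₜ[k] c) :=
  ⟨fun x y => by rw [hf.map_add, add_tmul], fun c x => by rw [hf.map_smul, smul_tmul']⟩

lemma lin_tmul_r {f : M → N} (hf : IsLinearMap k f) (c : P) :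
    IsLinearMap k (fun x => c ⊗ₜ[k] f x) :=
  ⟨fun x y => by rw [hf.map_add, tmul_add], fun c x => by rw [hf.map_smul, tmul_smul]⟩

lemma lin_smul_l {f : M → k} (hf : IsLinearMap k f) (c : P) :
    IsLinearMap k (fun x => f x • c) :=
  ⟨fun x y => by rw [hf.map_add, add_smul], fun c x => by rw [hf.map_smul, smul_assoc]⟩

lemma lin_smul_r {f : M → N} (hf : IsLinearMap k f) (c : k) :
    IsLinearMap k (fun x => c • f x) :=
  ⟨fun x y => by rw [hf.map_add, smul_add], fun d x => by rw [hf.map_smul, smul_comm]⟩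

/-- Sum over Sweedler components. -/
def DD {M : Type*} [AddCommMonoid M] (n : H → ℕ) (c₁ c₂ : H → ℕ → H) (h : H)
    (F : H → H → M) : M :=
  ∑ i ∈ Finset.range (n h), F (c₁ h i) (c₂ h i)

variable {n : H → ℕ} {c₁ c₂ : H → ℕ → H}

lemma DD_congr (h : H) {F G : H → H → M} (e : ∀ x y, F x y = G x y) :
    DD n c₁ c₂ h F = DD n c₁ c₂ h G := by
  have : F = G := by funext x y; exact e x y
  rw [this]

lemma lin_DD_body {F : M → H → H → N} (h : H) (hF : ∀ u v, IsLinearMap k (fun x => F x u v)) :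
    IsLinearMap k (fun x => DD n c₁ c₂ h (F x)) :=
  ⟨fun x y => by
    simp only [DD, ← Finset.sum_add_distrib]; exact Finset.sum_congr rfl fun i _ => (hF _ _).map_add _ _,
   fun x y => by
    simp only [DD, Finset.smul_sum]; exact Finset.sum_congr rfl fun i _ => (hF _ _).map_smul _ _⟩

lemma map_DD (φ : M →ₗ[k] N) (h : H) (F : H → H → M) :
    φ (DD n c₁ c₂ h F) = DD n c₁ c₂ h (fun x y => φ (F x y)) := by
  simp [DD, map_sum]

lemma lin_map_DD {f : M → N} (hf : IsLinearMap k f) (h : H) (F : H → H → M) :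
    f (DD n c₁ c₂ h F) = DD n c₁ c₂ h (fun x y => f (F x y)) :=
  map_DD (IsLinearMap.mk' f hf) h F

lemma DD_comm (h l : H) (F : H → H → H → H → M) :
    DD n c₁ c₂ h (fun x y => DD n c₁ c₂ l (fun z w => F x y z w)) =
    DD n c₁ c₂ l (fun z w => DD n c₁ c₂ h (fun x y => F x y z w)) := by
  simp only [DD]; exact Finset.sum_comm

/-- bundling -/
def bil (F : H → H → M) (h1 : ∀ y, IsLinearMap k (fun x => F x y))
    (h2 : ∀ x, IsLinearMap k (fun y => F x y)) : H →ₗ[k] H →ₗ[k] M :=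
  LinearMap.mk₂ k F (fun _ _ y => (h1 y).map_add _ _) (fun _ _ y => (h1 y).map_smul _ _)
    (fun x _ _ => (h2 x).map_add _ _) (fun _ x _ => (h2 x).map_smul _ _)

@[simp] lemma bil_apply (F : H → H → M) (h1 : ∀ y, IsLinearMap k (fun x => F x y))
    (h2 : ∀ x, IsLinearMap k (fun y => F x y)) (x y : H) : bil F h1 h2 x y = F x y := rfl

lemma DD_eq (hrep : IsSweedlerRep k H n c₁ c₂) (F : H → H → M)
    (h1 : ∀ y, IsLinearMap k (fun x => F x y))
    (h2 : ∀ x, IsLinearMap k (fun y => F x y)) (h : H) :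
    DD n c₁ c₂ h F = TensorProduct.lift (bil F h1 h2) (Coalgebra.comul (R := k) h) := by
  rw [hrep h]; simp [DD]

lemma lin_DD_base (hrep : IsSweedlerRep k H n c₁ c₂) {f : N → H} {F : H → H → M}
    (hf : IsLinearMap k f)
    (h1 : ∀ y, IsLinearMap k (fun x => F x y))
    (h2 : ∀ x, IsLinearMap k (fun y => F x y)) :
    IsLinearMap k (fun x => DD n c₁ c₂ (f x) F) := by
  simp only [DD_eq hrep F h1 h2]
  exact lin_map _ (lin_map _ hf)

/-- Linearity facts, proved by the default tactic block. -/
lemma linp {Q : Prop} (hQ : Q := by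
  repeat' first
    | assumption
    | exact lin_id
    | intro _
    | apply lin_tmul_l
    | apply lin_tmul_r
    | apply lin_mul_l
    | apply lin_mul_r
    | apply lin_smul_l
    | apply lin_smul_r
    | apply lin_map
    | apply lin_app
    | apply lin_DD_body
    | apply lin_DD_base) : Q := hQ

lemma DD_coassoc (hrep : IsSweedlerRep k H n c₁ c₂) (F : H → H → H → M)
    (h1 : ∀ y z, IsLinearMap k (fun x => F x y z))
    (h2 : ∀ x z, IsLinearMap k (fun y => F x y z))
    (h3 : ∀ x y, IsLinearMap k (fun z => F x y z)) (h : H) :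
    DD n c₁ c₂ h (fun x t => DD n c₁ c₂ t (fun y z => F x y z)) =
    DD n c₁ c₂ h (fun t z => DD n c₁ c₂ t (fun x y => F x y z)) := by
  let B : H →ₗ[k] H ⊗[k] H →ₗ[k] M :=
    IsLinearMap.mk' (fun x => TensorProduct.lift (bil (F x) (h2 x) (h3 x)))
      ⟨fun x y => by ext u v; simp [(h1 u v).map_add], fun c y => by ext u v; simp [(h1 u v).map_smul]⟩
  have hB : ∀ x y z, B x (y ⊗ₜ z) = F x y z := fun x y z => by simp [B]
  have key := congrArg (TensorProduct.lift B) (Coalgebra.coassoc_apply (R := k) h)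
  rw [hrep h] at key
  simp only [map_sum, LinearMap.rTensor_tmul, LinearMap.lTensor_tmul] at key
  simp only [hrep (c₁ h _), hrep (c₂ h _), sum_tmul, tmul_sum, map_sum, TensorProduct.assoc_tmul,
    TensorProduct.lift.tmul, hB] at key
  exact key.symm

lemma DD_counit_l (hrep : IsSweedlerRep k H n c₁ c₂) {F : H → M} (hF : IsLinearMap k F) (h : H) :
    DD n c₁ c₂ h (fun x y => Coalgebra.counit (R := k) x • F y) = F h := by
  have key := congrArg (TensorProduct.lid k H) (Coalgebra.rTensor_counit_comul (R := k) h)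
  rw [hrep h] at key
  simp only [map_sum, LinearMap.rTensor_tmul, TensorProduct.lid_tmul, one_smul] at key
  have := congrArg (IsLinearMap.mk' F hF) key
  simpa [DD] using this

lemma DD_counit_r (hrep : IsSweedlerRep k H n c₁ c₂) {F : H → M} (hF : IsLinearMap k F) (h : H) :
    DD n c₁ c₂ h (fun x y => Coalgebra.counit (R := k) y • F x) = F h := by
  have key := congrArg (TensorProduct.rid k H) (Coalgebra.lTensor_counit_comul (R := k) h)
  rw [hrep h] at key
  simp only [map_sum, LinearMap.lTensor_tmul, TensorProduct.rid_tmul, one_smul] at key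
  have := congrArg (IsLinearMap.mk' F hF) key
  simpa [DD] using this

lemma DD_one (hrep : IsSweedlerRep k H n c₁ c₂) (F : H → H → M)
    (h1 : ∀ y, IsLinearMap k (fun x => F x y))
    (h2 : ∀ x, IsLinearMap k (fun y => F x y)) :
    DD n c₁ c₂ 1 F = F 1 1 := by
  rw [DD_eq hrep F h1 h2, Bialgebra.comul_one, Algebra.TensorProduct.one_def]; simp

lemma DD_mul (hrep : IsSweedlerRep k H n c₁ c₂) (F : H → H → M)
    (h1 : ∀ y, IsLinearMap k (fun x => F x y))
    (h2 : ∀ x, IsLinearMap k (fun y => F x y)) (g l : H) :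
    DD n c₁ c₂ (g * l) F =
      DD n c₁ c₂ g (fun x y => DD n c₁ c₂ l (fun z w => F (x * z) (y * w))) := by
  rw [DD_eq hrep F h1 h2, Bialgebra.comul_mul, hrep g, hrep l]
  simp [DD, Finset.sum_mul_sum]

lemma DD_antipode_l (hrep : IsSweedlerRep k H n c₁ c₂) {F : H → M} (hF : IsLinearMap k F) (h : H) :
    DD n c₁ c₂ h (fun x y => F (HopfAlgebra.antipode k x * y)) =
      Coalgebra.counit (R := k) h • F 1 := by
  have key := HopfAlgebra.mul_antipode_rTensor_comul_apply (R := k) h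
  rw [hrep h] at key
  simp only [map_sum, LinearMap.rTensor_tmul, LinearMap.mul'_apply] at key
  have := congrArg (IsLinearMap.mk' F hF) key
  rw [Algebra.algebraMap_eq_smul_one, map_smul] at this
  simpa [DD] using this

lemma comul_antipode' (hrep : IsSweedlerRep k H n c₁ c₂) (h : H) :
    Coalgebra.comul (R := k) (HopfAlgebra.antipode k h) =
      DD n c₁ c₂ h (fun x y => HopfAlgebra.antipode k y ⊗ₜ[k] HopfAlgebra.antipode k x) := by
  let G : H →ₗ[k] H ⊗[k] H :=
    (TensorProduct.map (HopfAlgebra.antipode k) (HopfAlgebra.antipode k)) ∘ₗ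
      (TensorProduct.comm k H H).toLinearMap ∘ₗ Coalgebra.comul
  have hG : ∀ h, G h =
      DD n c₁ c₂ h (fun x y => HopfAlgebra.antipode k y ⊗ₜ[k] HopfAlgebra.antipode k x) := by
    intro h; simp [G, hrep h, DD]
  have hl : WithConv.toConv G * WithConv.toConv (Coalgebra.comul (R := k) (A := H)) = 1 := by
    ext h
    have e1 : (WithConv.toConv G * WithConv.toConv (Coalgebra.comul (R := k) (A := H))).ofConv h
        = DD n c₁ c₂ h (fun p q => G p * Coalgebra.comul (R := k) q) := by
      simp [LinearMap.convMul_def, hrep h, DD]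
    rw [e1, DD_congr (G := fun p q => DD n c₁ c₂ p (fun x y => DD n c₁ c₂ q (fun z w =>
      (HopfAlgebra.antipode k y * z) ⊗ₜ[k] (HopfAlgebra.antipode k x * w)))) h
      (fun p q => by rw [hG, hrep q]; simp [DD, Finset.sum_mul_sum])]
    rw [← DD_coassoc hrep (fun x y q => DD n c₁ c₂ q (fun z w =>
      (HopfAlgebra.antipode k y * z) ⊗ₜ[k] (HopfAlgebra.antipode k x * w))) linp linp linp]
    rw [DD_congr (G := fun x t => (1 : H) ⊗ₜ[k] (HopfAlgebra.antipode k x * t)) h]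
    · rw [DD_antipode_l hrep (F := fun t => (1 : H) ⊗ₜ[k] t) linp]
      simp [Algebra.algebraMap_eq_smul_one, Algebra.TensorProduct.one_def]
    intro x t
    rw [DD_coassoc hrep (fun y z w =>
      (HopfAlgebra.antipode k y * z) ⊗ₜ[k] (HopfAlgebra.antipode k x * w)) linp linp linp]
    rw [← DD_counit_l hrep (F := fun t => (1 : H) ⊗ₜ[k] (HopfAlgebra.antipode k x * t)) linp t]
    refine DD_congr t fun s w => ?_
    exact DD_antipode_l hrep (F := fun u => u ⊗ₜ[k] (HopfAlgebra.antipode k x * w)) linp s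
  have := left_inv_eq_right_inv hl (LinearMap.comul_right_inv (R := k) (C := H))
  have := congrArg (fun φ => φ.ofConv h) this
  simp only [← hG]
  exact this.symm

lemma DD_antipode (hrep : IsSweedlerRep k H n c₁ c₂) (F : H → H → M)
    (h1 : ∀ y, IsLinearMap k (fun x => F x y))
    (h2 : ∀ x, IsLinearMap k (fun y => F x y)) (h : H) :
    DD n c₁ c₂ (HopfAlgebra.antipode k h) F =
      DD n c₁ c₂ h (fun x y => F (HopfAlgebra.antipode k y) (HopfAlgebra.antipode k x)) := by
  rw [DD_eq hrep F h1 h2, comul_antipode' hrep, map_DD]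
  simp

variable {σ : H →ₗ[k] A →ₗ[k] A} {f finv : H →ₗ[k] H →ₗ[k] A}

lemma cm_tmul (hrep : IsSweedlerRep k H n c₁ c₂) (a b : A) (h l : H) :
    crossedMul k A H σ f (a ⊗ₜ h) (b ⊗ₜ l) =
      DD n c₁ c₂ h (fun t z => DD n c₁ c₂ t (fun x y => DD n c₁ c₂ l (fun u v =>
        (a * (σ x b * f y u)) ⊗ₜ[k] (z * v)))) := by
  simp [crossedMul, hrep h, hrep l, hrep (c₁ h _), DD, sum_tmul, tmul_sum]
  rw [Finset.sum_comm]
  exact Finset.sum_congr rfl fun _ _ => Finset.sum_comm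

lemma gi_apply (hrep : IsSweedlerRep k H n c₁ c₂) (h : H) :
    gammaInv k A H finv h = DD n c₁ c₂ h (fun x t => DD n c₁ c₂ t (fun z w =>
        finv (HopfAlgebra.antipode k z) w ⊗ₜ[k] HopfAlgebra.antipode k x)) := by
  simp [gammaInv, hrep h, hrep (c₂ h _), DD, tmul_sum]

lemma weak_mul (hweak : IsWeakAction k A H n c₁ c₂ σ) (h : H) (a b : A) :
    σ h (a * b) = DD n c₁ c₂ h (fun x y => σ x a * σ y b) := hweak.1 h a b

/-- right multiplication by an element of `A` -/
lemma cm_A (hrep : IsSweedlerRep k H n c₁ c₂) (hnormal : IsNormal k A H f) (b a : A) (h : H) :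
    crossedMul k A H σ f (b ⊗ₜ h) (a ⊗ₜ 1) =
      DD n c₁ c₂ h (fun x y => (b * σ x a) ⊗ₜ[k] y) := by
  rw [cm_tmul hrep]
  refine DD_congr h fun t z => ?_
  rw [← DD_counit_r hrep (F := fun x => (b * σ x a) ⊗ₜ[k] z) linp t]
  refine DD_congr t fun x y => ?_
  rw [DD_one hrep _ linp linp, (hnormal y).1]
  simp [smul_tmul']

/-- left multiplication by an element of `A` -/
lemma A_cm (hrep : IsSweedlerRep k H n c₁ c₂) (hnormal : IsNormal k A H f)
    (hweak : IsWeakAction k A H n c₁ c₂ σ) (a b : A) (l : H) :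
    crossedMul k A H σ f (a ⊗ₜ 1) (b ⊗ₜ l) = (a * b) ⊗ₜ l := by
  rw [cm_tmul hrep, DD_one hrep _ linp linp, DD_one hrep _ linp linp]
  rw [← DD_counit_l hrep (F := fun u => (a * b) ⊗ₜ[k] u) linp l]
  refine DD_congr l fun x y => ?_
  rw [(hnormal x).2, hweak.2.2]
  simp [smul_tmul']

lemma assoc_AEE (hrep : IsSweedlerRep k H n c₁ c₂) (hnormal : IsNormal k A H f)
    (hweak : IsWeakAction k A H n c₁ c₂ σ) (a : A) (x y : A ⊗[k] H) :
    crossedMul k A H σ f (crossedMul k A H σ f (a ⊗ₜ 1) x) y =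
      crossedMul k A H σ f (a ⊗ₜ 1) (crossedMul k A H σ f x y) := by
  induction x with
  | zero => simp
  | add x x' h1 h2 => simp [h1, h2]
  | tmul b h =>
  induction y with
  | zero => simp
  | add x x' h1 h2 => simp [h1, h2]
  | tmul c l =>
    rw [A_cm hrep hnormal hweak, cm_tmul hrep, cm_tmul hrep]
    simp only [map_DD, A_cm hrep hnormal hweak, mul_assoc]

lemma assoc_EAE (hrep : IsSweedlerRep k H n c₁ c₂) (hnormal : IsNormal k A H f)
    (hweak : IsWeakAction k A H n c₁ c₂ σ) (a : A) (x y : A ⊗[k] H) :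
    crossedMul k A H σ f (crossedMul k A H σ f x (a ⊗ₜ 1)) y =
      crossedMul k A H σ f x (crossedMul k A H σ f (a ⊗ₜ 1) y) := by
  induction x with
  | zero => simp
  | add x x' h1 h2 => simp [h1, h2]
  | tmul b h =>
  induction y with
  | zero => simp
  | add x x' h1 h2 => simp [h1, h2]
  | tmul c l =>
    rw [A_cm hrep hnormal hweak, cm_A hrep hnormal,
      lin_map_DD (f := fun w => crossedMul k A H σ f w (c ⊗ₜ l)) linp]
    simp only [cm_tmul hrep, weak_mul hweak]
    -- LHS : x ⊗ ((t1 ⊗ t2) ⊗ z)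
    rw [DD_coassoc hrep (fun x t z => DD n c₁ c₂ t (fun x_1 y => DD n c₁ c₂ l (fun u v =>
      (b * σ x a * (σ x_1 c * f y u)) ⊗ₜ[k] (z * v)))) linp linp linp]
    refine DD_congr h fun t z => ?_
    rw [DD_coassoc hrep (fun x x_1 y => DD n c₁ c₂ l (fun u v =>
      (b * σ x a * (σ x_1 c * f y u)) ⊗ₜ[k] (z * v))) linp linp linp]
    refine DD_congr t fun s y => ?_
    rw [DD_comm]
    refine DD_congr l fun u v => ?_
    rw [lin_map_DD (f := fun w => (b * (w * f y u)) ⊗ₜ[k] (z * v)) linp]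
    simp only [mul_assoc]

lemma assoc_EEA (hrep : IsSweedlerRep k H n c₁ c₂) (hnormal : IsNormal k A H f)
    (hweak : IsWeakAction k A H n c₁ c₂ σ) (htwisted : IsTwistedModule k A H n c₁ c₂ σ f)
    (a : A) (x y : A ⊗[k] H) :
    crossedMul k A H σ f (crossedMul k A H σ f x y) (a ⊗ₜ 1) =
      crossedMul k A H σ f x (crossedMul k A H σ f y (a ⊗ₜ 1)) := by
  have htw : ∀ h l a, DD n c₁ c₂ h (fun x y => DD n c₁ c₂ l (fun z w => σ x (σ z a) * f y w)) =
    DD n c₁ c₂ h (fun x y => DD n c₁ c₂ l (fun z w => f x z * σ (y * w) a)) := htwisted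
  induction x with
  | zero => simp
  | add x x' h1 h2 => simp [h1, h2]
  | tmul b h =>
  induction y with
  | zero => simp
  | add x x' h1 h2 => simp [h1, h2]
  | tmul c l =>
    -- common form
    trans DD n c₁ c₂ h (fun P z => DD n c₁ c₂ P (fun x q => DD n c₁ c₂ q (fun y y' =>
      DD n c₁ c₂ l (fun s v => DD n c₁ c₂ s (fun u u' =>
        (b * (σ x c * (f y u * σ (y' * u') a))) ⊗ₜ[k] (z * v))))))
    · have e : ∀ w, crossedMul k A H σ f w (a ⊗ₜ 1) = (crossedMul k A H σ f).flip (a ⊗ₜ 1) w :=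
        fun w => rfl
      rw [e, cm_tmul hrep]
      simp only [map_DD]
      simp only [LinearMap.flip_apply, cm_A hrep hnormal]
      trans DD n c₁ c₂ h (fun t Z => DD n c₁ c₂ Z (fun z1 z2 => DD n c₁ c₂ t (fun x y =>
        DD n c₁ c₂ l (fun s v => DD n c₁ c₂ s (fun u u' =>
        (b * (σ x c * (f y u * σ (z1 * u') a))) ⊗ₜ[k] (z2 * v))))))
      · refine DD_congr h fun t Z => ?_
        refine Eq.trans ?_ (DD_comm _ _ _)
        refine DD_congr t fun x y => ?_
        trans DD n c₁ c₂ l (fun u V => DD n c₁ c₂ Z (fun z1 z2 => DD n c₁ c₂ V (fun v1 v2 =>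
          (b * (σ x c * (f y u * σ (z1 * v1) a))) ⊗ₜ[k] (z2 * v2))))
        · refine DD_congr l fun u V => ?_
          rw [DD_mul hrep _ linp linp]
          simp only [mul_assoc]
        rw [DD_comm]
        refine DD_congr Z fun z1 z2 => ?_
        exact DD_coassoc hrep (fun u v1 v2 =>
          (b * (σ x c * (f y u * σ (z1 * v1) a))) ⊗ₜ[k] (z2 * v2)) linp linp linp l
      · rw [DD_coassoc hrep (fun t z1 z2 => DD n c₁ c₂ t (fun x y =>
          DD n c₁ c₂ l (fun s v => DD n c₁ c₂ s (fun u u' =>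
          (b * (σ x c * (f y u * σ (z1 * u') a))) ⊗ₜ[k] (z2 * v))))) linp linp linp]
        refine DD_congr h fun P z => ?_
        exact (DD_coassoc hrep (fun x y z1 => 
          DD n c₁ c₂ l (fun s v => DD n c₁ c₂ s (fun u u' =>
          (b * (σ x c * (f y u * σ (z1 * u') a))) ⊗ₜ[k] (z * v)))) linp linp linp P).symm
    · rw [cm_A hrep hnormal]
      simp only [map_DD, cm_tmul hrep, weak_mul hweak]
      rw [DD_comm]
      refine DD_congr h fun t z => ?_
      rw [DD_comm]
      trans DD n c₁ c₂ t (fun X y => DD n c₁ c₂ X (fun x x2 => 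
        DD n c₁ c₂ l (fun s v => DD n c₁ c₂ s (fun p u => 
          (b * (σ x c * (σ x2 (σ p a) * f y u))) ⊗ₜ[k] (z * v)))))
      · rw [← DD_coassoc hrep (fun x x2 y => 
          DD n c₁ c₂ l (fun s v => DD n c₁ c₂ s (fun p u => 
          (b * (σ x c * (σ x2 (σ p a) * f y u))) ⊗ₜ[k] (z * v)))) linp linp linp]
        refine DD_congr t fun x q => ?_
        rw [DD_comm]
        refine Eq.trans ?_ (DD_comm _ _ _)
        refine DD_congr l fun s v => ?_
        have := congrArg (fun w => (b * (σ x c * w)) ⊗ₜ[k] (z * v)) (htw q s a)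
        rw [lin_map_DD (f := fun w => (b * (σ x c * w)) ⊗ₜ[k] (z * v)) linp,
          lin_map_DD (f := fun w => (b * (σ x c * w)) ⊗ₜ[k] (z * v)) linp] at this
        simp only [lin_map_DD (n := n) (c₁ := c₁) (c₂ := c₂)
          (f := fun w => (b * (σ x c * w)) ⊗ₜ[k] (z * v)) (k := k) linp] at this
        exact this.symm
      · refine DD_congr t fun X y => ?_
        trans DD n c₁ c₂ l (fun s v => DD n c₁ c₂ s (fun p u => DD n c₁ c₂ X (fun x x2 =>
          (b * (σ x c * (σ x2 (σ p a) * f y u))) ⊗ₜ[k] (z * v))))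
        · rw [DD_comm]
          exact DD_congr l fun s v => DD_comm _ _ _
        rw [← DD_coassoc hrep (fun p u v => DD n c₁ c₂ X (fun x x2 =>
          (b * (σ x c * (σ x2 (σ p a) * f y u))) ⊗ₜ[k] (z * v))) linp linp linp]
        refine DD_congr l fun p L => ?_
        refine DD_congr L fun u v => ?_
        rw [lin_map_DD (f := fun w => (b * (w * f y u)) ⊗ₜ[k] (z * v)) linp]
        simp only [mul_assoc]

/-- convolution in `Hom (H ⊗ H, A)` -/
lemma conv2 (hrep : IsSweedlerRep k H n c₁ c₂) (B C : H →ₗ[k] H →ₗ[k] A) (g l : H) :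
    (WithConv.toConv (TensorProduct.lift B) * WithConv.toConv (TensorProduct.lift C)).ofConv
      (g ⊗ₜ[k] l) = DD n c₁ c₂ g (fun x y => DD n c₁ c₂ l (fun z w => B x z * C y w)) := by
  simp [LinearMap.convMul_def, hrep g, hrep l, DD, sum_tmul, tmul_sum]
  exact Finset.sum_comm

lemma tw_inv (hrep : IsSweedlerRep k H n c₁ c₂)
    (htwisted : IsTwistedModule k A H n c₁ c₂ σ f)
    (hinv : IsConvInverse k A H n c₁ c₂ f finv) (g l : H) (a : A) :
    DD n c₁ c₂ g (fun x y => DD n c₁ c₂ l (fun z w => finv x z * σ y (σ w a))) =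
    DD n c₁ c₂ g (fun x y => DD n c₁ c₂ l (fun z w => σ (x * z) a * finv y w)) := by
  have htw : ∀ h l a, DD n c₁ c₂ h (fun x y => DD n c₁ c₂ l (fun z w => σ x (σ z a) * f y w)) =
    DD n c₁ c₂ h (fun x y => DD n c₁ c₂ l (fun z w => f x z * σ (y * w) a)) := htwisted
  let P : H →ₗ[k] H →ₗ[k] A := bil (fun x y => σ x (σ y a)) linp linp
  let Q : H →ₗ[k] H →ₗ[k] A := bil (fun x y => σ (x * y) a) linp linp
  have e1 : WithConv.toConv (TensorProduct.lift P) * WithConv.toConv (TensorProduct.lift f) =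
      WithConv.toConv (TensorProduct.lift f) * WithConv.toConv (TensorProduct.lift Q) := by
    ext x y
    exact (conv2 hrep P f x y).trans ((htw x y a).trans (conv2 hrep f Q x y).symm)
  have e2 : WithConv.toConv (TensorProduct.lift f) * WithConv.toConv (TensorProduct.lift finv)
      = 1 := by
    ext x y
    refine (conv2 hrep f finv x y).trans ((hinv x y).1.trans ?_)
    simp [Algebra.algebraMap_eq_smul_one, mul_comm]
  have e3 : WithConv.toConv (TensorProduct.lift finv) * WithConv.toConv (TensorProduct.lift f)
      = 1 := by
    ext x y
    refine (conv2 hrep finv f x y).trans ((hinv x y).2.trans ?_)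
    simp [Algebra.algebraMap_eq_smul_one, mul_comm]
  have e4 : WithConv.toConv (TensorProduct.lift finv) * WithConv.toConv (TensorProduct.lift P) =
      WithConv.toConv (TensorProduct.lift Q) * WithConv.toConv (TensorProduct.lift finv) := by
    calc _ = WithConv.toConv (TensorProduct.lift finv) * (WithConv.toConv (TensorProduct.lift P) *
          WithConv.toConv (TensorProduct.lift f)) * WithConv.toConv (TensorProduct.lift finv) := by
          rw [mul_assoc, mul_assoc _ _ (WithConv.toConv (TensorProduct.lift finv)), e2, mul_one]
      _ = _ := by rw [e1, ← mul_assoc, e3, one_mul]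
  have e5 := congrArg (fun φ => φ.ofConv (g ⊗ₜ[k] l)) e4
  exact (conv2 hrep finv P g l).symm.trans (e5.trans (conv2 hrep Q finv g l))

lemma gi_A (hrep : IsSweedlerRep k H n c₁ c₂) (hnormal : IsNormal k A H f)
    (hweak : IsWeakAction k A H n c₁ c₂ σ) (htwisted : IsTwistedModule k A H n c₁ c₂ σ f)
    (hinv : IsConvInverse k A H n c₁ c₂ f finv) (h : H) (a : A) :
    DD n c₁ c₂ h (fun x y => crossedMul k A H σ f (gammaInv k A H finv x) (σ y a ⊗ₜ 1)) =
      crossedMul k A H σ f (a ⊗ₜ 1) (gammaInv k A H finv h) := by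
  have e : ∀ w c, crossedMul k A H σ f w c = (crossedMul k A H σ f).flip c w :=
    fun w c => rfl
  rw [gi_apply hrep]
  simp only [gi_apply hrep, e _ (σ _ a ⊗ₜ 1)]
  simp only [map_DD]
  simp only [LinearMap.flip_apply, cm_A hrep hnormal, A_cm hrep hnormal hweak]
  trans DD n c₁ c₂ h (fun p q => DD n c₁ c₂ p (fun u s => DD n c₁ c₂ s (fun v t =>
    DD n c₁ c₂ t (fun z w => (finv (HopfAlgebra.antipode k z) w *
      σ (HopfAlgebra.antipode k v) (σ q a)) ⊗ₜ[k] HopfAlgebra.antipode k u))))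
  · refine DD_congr h fun p q => ?_
    rw [DD_coassoc hrep (fun u v t => DD n c₁ c₂ t (fun z w => (finv (HopfAlgebra.antipode k z) w *
      σ (HopfAlgebra.antipode k v) (σ q a)) ⊗ₜ[k] HopfAlgebra.antipode k u)) linp linp linp]
    refine DD_congr p fun x t => ?_
    refine Eq.trans ?_ (DD_comm _ _ _)
    refine DD_congr t fun z w => ?_
    rw [DD_antipode hrep _ linp linp]
  rw [← DD_coassoc hrep (fun u s q => DD n c₁ c₂ s (fun v t =>
    DD n c₁ c₂ t (fun z w => (finv (HopfAlgebra.antipode k z) w *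
      σ (HopfAlgebra.antipode k v) (σ q a)) ⊗ₜ[k] HopfAlgebra.antipode k u))) linp linp linp]
  refine DD_congr h fun u r => ?_
  trans DD n c₁ c₂ r (fun m l => DD n c₁ c₂ m (fun v z => DD n c₁ c₂ l (fun w q =>
    (finv (HopfAlgebra.antipode k z) w *
      σ (HopfAlgebra.antipode k v) (σ q a)) ⊗ₜ[k] HopfAlgebra.antipode k u)))
  · trans DD n c₁ c₂ r (fun s q => DD n c₁ c₂ s (fun m w => DD n c₁ c₂ m (fun v z =>
      (finv (HopfAlgebra.antipode k z) w *
        σ (HopfAlgebra.antipode k v) (σ q a)) ⊗ₜ[k] HopfAlgebra.antipode k u)))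
    · refine DD_congr r fun s q => ?_
      exact DD_coassoc hrep (fun v z w => (finv (HopfAlgebra.antipode k z) w *
        σ (HopfAlgebra.antipode k v) (σ q a)) ⊗ₜ[k] HopfAlgebra.antipode k u) linp linp linp s
    · rw [← DD_coassoc hrep (fun m w q => DD n c₁ c₂ m (fun v z =>
        (finv (HopfAlgebra.antipode k z) w *
        σ (HopfAlgebra.antipode k v) (σ q a)) ⊗ₜ[k] HopfAlgebra.antipode k u)) linp linp linp]
      exact DD_congr r fun m l => DD_comm _ _ _
  trans DD n c₁ c₂ r (fun m l => DD n c₁ c₂ m (fun v z => DD n c₁ c₂ l (fun w q =>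
    (σ (HopfAlgebra.antipode k z * w) a * finv (HopfAlgebra.antipode k v) q)
      ⊗ₜ[k] HopfAlgebra.antipode k u)))
  · refine DD_congr r fun m l => ?_
    have key := tw_inv hrep htwisted hinv (HopfAlgebra.antipode k m) l a
    rw [DD_antipode hrep _ linp linp, DD_antipode hrep _ linp linp] at key
    have key2 := congrArg ((TensorProduct.mk k A H).flip (HopfAlgebra.antipode k u)) key
    simp only [map_DD] at key2
    exact key2
  rw [← DD_coassoc hrep (fun v z l => DD n c₁ c₂ l (fun w q =>
    (σ (HopfAlgebra.antipode k z * w) a * finv (HopfAlgebra.antipode k v) q)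
      ⊗ₜ[k] HopfAlgebra.antipode k u)) linp linp linp]
  refine DD_congr r fun v t => ?_
  rw [DD_coassoc hrep (fun z w q =>
    (σ (HopfAlgebra.antipode k z * w) a * finv (HopfAlgebra.antipode k v) q)
      ⊗ₜ[k] HopfAlgebra.antipode k u) linp linp linp]
  rw [← DD_counit_l hrep (F := fun q => (a * finv (HopfAlgebra.antipode k v) q)
      ⊗ₜ[k] HopfAlgebra.antipode k u) linp t]
  refine DD_congr t fun x q => ?_
  rw [DD_antipode_l hrep (F := fun y => (σ y a * finv (HopfAlgebra.antipode k v) q)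
      ⊗ₜ[k] HopfAlgebra.antipode k u) linp, hweak.2.2]

lemma gam_A (hrep : IsSweedlerRep k H n c₁ c₂) (hnormal : IsNormal k A H f)
    (hweak : IsWeakAction k A H n c₁ c₂ σ) (h : H) (a : A) :
    DD n c₁ c₂ h (fun x y => crossedMul k A H σ f (σ x a ⊗ₜ 1) (gam k A H y)) =
      crossedMul k A H σ f (gam k A H h) (a ⊗ₜ 1) := by
  simp only [gam, TensorProduct.mk_apply, cm_A hrep hnormal, A_cm hrep hnormal hweak, mul_one,
    one_mul]

lemma swSum_succ (r : ℕ) (h : H) (F : (Fin (r + 2) → H) → M) :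
    swSum (H := H) n c₁ c₂ (r + 1) h F =
      DD n c₁ c₂ h (fun x y => swSum (H := H) n c₁ c₂ r y (fun g => F (Fin.cons x g))) := rfl

lemma swSum_congr (r : ℕ) (h : H) {F G : (Fin (r + 1) → H) → M} (e : ∀ v, F v = G v) :
    swSum (H := H) n c₁ c₂ r h F = swSum (H := H) n c₁ c₂ r h G := by
  have : F = G := funext e
  rw [this]

lemma swSum_map (φ : M →ₗ[k] N) (r : ℕ) (h : H) (F : (Fin (r + 1) → H) → M) :
    φ (swSum (H := H) n c₁ c₂ r h F) = swSum (H := H) n c₁ c₂ r h (fun v => φ (F v)) := by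
  induction r generalizing h with
  | zero => rfl
  | succ r ih =>
    rw [swSum_succ, swSum_succ, map_DD]
    exact DD_congr h fun x y => ih _ _

lemma swSum_add (r : ℕ) (h : H) (F G : (Fin (r + 1) → H) → M) :
    swSum (H := H) n c₁ c₂ r h (fun v => F v + G v) =
      swSum (H := H) n c₁ c₂ r h F + swSum (H := H) n c₁ c₂ r h G := by
  induction r generalizing h with
  | zero => rfl
  | succ r ih =>
    simp only [swSum_succ, ih, DD, Finset.sum_add_distrib]

lemma swSum_zero' (r : ℕ) (h : H) :
    swSum (H := H) n c₁ c₂ r h (fun _ => (0 : M)) = 0 := by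
  induction r generalizing h with
  | zero => rfl
  | succ r ih => simp only [swSum_succ, ih, DD, Finset.sum_const_zero]

lemma swSum_sum {ι : Type*} (s : Finset ι) (r : ℕ) (h : H) (F : ι → (Fin (r + 1) → H) → M) :
    swSum (H := H) n c₁ c₂ r h (fun v => ∑ i ∈ s, F i v) =
      ∑ i ∈ s, swSum (H := H) n c₁ c₂ r h (F i) := by
  classical
  induction s using Finset.induction_on with
  | empty => simp [swSum_zero']
  | insert i s hi ih => simp only [Finset.sum_insert hi, swSum_add, ih]

lemma swSum_smul (c : k) (r : ℕ) (h : H) (F : (Fin (r + 1) → H) → M) :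
    swSum (H := H) n c₁ c₂ r h (fun v => c • F v) =
      c • swSum (H := H) n c₁ c₂ r h F :=
  (swSum_map (LinearMap.lsmul k M c) r h F).symm

lemma swSum_DD (r : ℕ) (h t : H) (F : H → H → (Fin (r + 1) → H) → M) :
    swSum (H := H) n c₁ c₂ r h (fun v => DD n c₁ c₂ t (fun x y => F x y v)) =
      DD n c₁ c₂ t (fun x y => swSum (H := H) n c₁ c₂ r h (F x y)) := by
  simp only [DD, swSum_sum]

lemma lin_swSum_body {r : ℕ} (h : H) {F : N → (Fin (r + 1) → H) → M}
    (hF : ∀ v, IsLinearMap k (fun x => F x v)) :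
    IsLinearMap k (fun x => swSum (H := H) n c₁ c₂ r h (F x)) :=
  ⟨fun x y => by rw [← swSum_add]; exact swSum_congr _ _ fun v => (hF v).map_add _ _,
   fun c x => by rw [← swSum_smul]; exact swSum_congr _ _ fun v => (hF v).map_smul _ _⟩

variable (k) in
/-- linear in coordinate `p` -/
def LinAt {m : ℕ} (p : Fin m) (F : (Fin m → H) → M) : Prop :=
  ∀ v, IsLinearMap k (fun x => F (Function.update v p x))

/-- independent of coordinate `p` -/
def IndAt {M : Type*} {m : ℕ} (p : Fin m) (F : (Fin m → H) → M) : Prop :=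
  ∀ v x, F (Function.update v p x) = F v

lemma LinAt.cons {m : ℕ} {p : Fin m} {F : (Fin (m + 1) → H) → M} (hF : LinAt k p.succ F) (x : H) :
    LinAt k p (fun g => F (Fin.cons x g : Fin (m + 1) → H)) := by
  intro v
  have := hF (Fin.cons x v : Fin (m + 1) → H)
  simpa only [← Fin.cons_update] using this

lemma LinAt.head {m : ℕ} {F : (Fin (m + 1) → H) → M} (hF : LinAt k 0 F) (g : Fin m → H) :
    IsLinearMap k (fun x => F (Fin.cons x g : Fin (m + 1) → H)) := by
  have := hF (Fin.cons 0 g : Fin (m + 1) → H)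
  simpa only [Fin.update_cons_zero] using this

lemma lin_swSum_base (hrep : IsSweedlerRep k H n c₁ c₂) (r : ℕ) (F : (Fin (r + 1) → H) → M)
    (hF : ∀ p, LinAt k p F) : IsLinearMap k (fun h => swSum (H := H) n c₁ c₂ r h F) := by
  induction r with
  | zero =>
    have := hF 0 (fun _ => 0)
    have e : ∀ x : H, Function.update (fun _ => 0) (0 : Fin 1) x = fun _ => x := by
      intro x; funext i; rw [Subsingleton.elim i 0]; simp
    simp only [e] at this
    exact this
  | succ r ih =>
    simp only [swSum_succ]
    refine lin_DD_base hrep lin_id (fun y => ?_) (fun x => ?_)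
    · exact lin_swSum_body y fun v => (hF 0).head v
    · exact ih _ fun p => (hF p.succ).cons x

/-- `v` with coordinate `j` replaced by the two coordinates `x`, `y` -/
def splt {r : ℕ} (j : Fin (r + 1)) (v : Fin (r + 1) → H) (x y : H) : Fin (r + 2) → H := fun i =>
  if h : i.val < j.val then v ⟨i.val, by omega⟩
  else if i.val = j.val then x else if h' : i.val = j.val + 1 then y
  else v ⟨i.val - 1, by omega⟩

lemma splt_lt {r : ℕ} {j : Fin (r + 1)} {v : Fin (r + 1) → H} {x y : H} {i : Fin (r + 2)}
    (i' : Fin (r + 1)) (h : i.val < j.val) (h' : i'.val = i.val) : splt j v x y i = v i' := by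
  simp only [splt, h, dif_pos]; congr 1; exact Fin.ext h'.symm

lemma splt_eq {r : ℕ} {j : Fin (r + 1)} {v : Fin (r + 1) → H} {x y : H} {i : Fin (r + 2)}
    (h : i.val = j.val) : splt j v x y i = x := by
  simp [splt, h]

lemma splt_eq1 {r : ℕ} {j : Fin (r + 1)} {v : Fin (r + 1) → H} {x y : H} {i : Fin (r + 2)}
    (h : i.val = j.val + 1) : splt j v x y i = y := by
  simp [splt, h]

lemma splt_gt {r : ℕ} {j : Fin (r + 1)} {v : Fin (r + 1) → H} {x y : H} {i : Fin (r + 2)}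
    (i' : Fin (r + 1)) (h : j.val < i'.val) (h' : i.val = i'.val + 1) : splt j v x y i = v i' := by
  have h1 : ¬ i.val < j.val := by omega
  have h2 : ¬ i.val = j.val := by omega
  have h3 : ¬ i.val = j.val + 1 := by omega
  simp only [splt, h1, h2, h3, dif_neg, if_false, not_false_eq_true]
  congr 1; apply Fin.ext; simp; omega

lemma splt_zero_cons {r : ℕ} (t : H) (g : Fin r → H) (x y : H) :
    splt (0 : Fin (r + 1)) (Fin.cons t g : Fin (r + 1) → H) x y = Fin.cons x (Fin.cons y g) := by
  funext i
  refine Fin.cases ?_ (fun i => Fin.cases ?_ (fun i => ?_) i) i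
  · rw [splt_eq rfl]; rfl
  · rw [splt_eq1 (by simp)]; rfl
  · rw [splt_gt i.succ (by simp) (by simp)]; rfl

lemma splt_succ_cons {r : ℕ} (j : Fin (r + 1)) (t : H) (g : Fin (r + 1) → H) (x y : H) :
    splt j.succ (Fin.cons t g : Fin (r + 2) → H) x y = Fin.cons t (splt j g x y) := by
  funext i
  refine Fin.cases ?_ (fun i => ?_) i
  · rw [splt_lt 0 (by simp) (by simp)]; rfl
  · rw [Fin.cons_succ]
    rcases lt_trichotomy i.val j.val with hh | hh | hh
    · have hi : i.val < r + 1 := by omega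
      rw [splt_lt (⟨i.val, hi⟩ : Fin (r + 1)).succ (by simpa using hh) (by simp),
        splt_lt ⟨i.val, hi⟩ hh rfl, Fin.cons_succ]
    · rw [splt_eq (by simpa using hh), splt_eq hh]
    · by_cases h1 : i.val = j.val + 1
      · rw [splt_eq1 (by simpa using h1), splt_eq1 h1]
      · have hi : i.val - 1 < r + 1 := by omega
        rw [splt_gt (⟨i.val - 1, hi⟩ : Fin (r + 1)).succ (by simp; omega) (by simp; omega),
          splt_gt ⟨i.val - 1, hi⟩ (by simp; omega) (by simp; omega), Fin.cons_succ]

lemma swSum_merge (hrep : IsSweedlerRep k H n c₁ c₂) (r : ℕ) (j : Fin (r + 1)) (h : H)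
    (F : (Fin (r + 2) → H) → M) (hF : ∀ p, LinAt k p F) :
    swSum (H := H) n c₁ c₂ (r + 1) h F =
      swSum (H := H) n c₁ c₂ r h (fun v => DD n c₁ c₂ (v j) (fun x y => F (splt j v x y))) := by
  induction r generalizing h with
  | zero =>
    rw [swSum_succ]
    show _ = (DD n c₁ c₂ h (fun x y => F (splt j (fun _ => h) x y)) : M)
    refine DD_congr h fun x y => ?_
    show F _ = F _
    congr 1
    funext i
    refine Fin.cases ?_ (fun i => ?_) i
    · rw [splt_eq (by simp)]; rfl
    · rw [splt_eq1 (by simp)]; rfl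
  | succ r ih =>
    refine Fin.cases ?_ (fun j => ?_) j
    · rw [swSum_succ, swSum_succ]
      simp only [swSum_succ]
      rw [DD_coassoc hrep (fun x y w => swSum (H := H) n c₁ c₂ r w
        (fun g => F (Fin.cons x (Fin.cons y g : Fin (r + 2) → H) : Fin (r + 3) → H)))]
      · refine DD_congr h fun t w => ?_
        simp only [Fin.cons_zero, splt_zero_cons]
        rw [swSum_DD]
      · intro y z
        exact lin_swSum_body z fun v => (hF 0).head _
      · intro x z
        exact lin_swSum_body z fun v => ((hF 1).cons (p := 0) x).head v
      · intro x y
        exact lin_swSum_base hrep _ _ fun p => ((hF p.succ.succ).cons x).cons y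
    · rw [swSum_succ, swSum_succ]
      refine DD_congr h fun x t => ?_
      rw [ih j t _ (fun p => (hF p.succ).cons x)]
      simp only [Fin.cons_succ, splt_succ_cons]

section coords
variable {m : ℕ} {p : Fin m}

lemma LinAt.app {φ : H → M} (hφ : IsLinearMap k φ) (q : Fin m) (h : q.val = p.val) :
    LinAt k p (fun v => φ (v q)) := by
  obtain rfl : q = p := Fin.ext h
  intro v
  simpa using hφ

lemma IndAt.app {M : Type*} (φ : H → M) (q : Fin m) (h : q.val ≠ p.val) :
    IndAt p (fun v => φ (v q)) := by
  intro v x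
  show φ _ = φ _
  rw [Function.update_of_ne (fun e => h (by rw [e]))]

lemma IndAt.comp {M N : Type*} {F : (Fin m → H) → M} (hF : IndAt p F) (φ : M → N) :
    IndAt p (fun v => φ (F v)) := fun v x => congrArg φ (hF v x)

lemma IndAt.comp₂ {M N P : Type*} {F : (Fin m → H) → M} {G : (Fin m → H) → N} (hF : IndAt p F)
    (hG : IndAt p G) (φ : M → N → P) :
    IndAt p (fun v => φ (F v) (G v)) := fun v x => congrArg₂ φ (hF v x) (hG v x)

lemma LinAt.comp {F : (Fin m → H) → M} (hF : LinAt k p F) (φ : M →ₗ[k] N) :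
    LinAt k p (fun v => φ (F v)) := fun v => lin_map φ (hF v)

lemma LinAt.left {F : (Fin m → H) → M} {G : (Fin m → H) → N} (hF : LinAt k p F)
    (hG : IndAt p G) (φ : M →ₗ[k] N →ₗ[k] P) : LinAt k p (fun v => φ (F v) (G v)) := by
  intro v
  simp only [hG v]
  exact lin_app φ (hF v) _

lemma LinAt.right {F : (Fin m → H) → M} {G : (Fin m → H) → N} (hF : IndAt p F)
    (hG : LinAt k p G) (φ : M →ₗ[k] N →ₗ[k] P) : LinAt k p (fun v => φ (F v) (G v)) := by
  intro v
  simp only [hF v]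
  exact lin_map _ (hG v)

lemma LinAt.tp {r : ℕ} {g : Fin r → (Fin m → H) → N} (i : Fin r) (h1 : LinAt k p (g i))
    (h2 : ∀ i', i' ≠ i → IndAt p (g i')) :
    LinAt k p (fun v => PiTensorProduct.tprod k (fun i => g i v)) := by
  intro v
  have e : ∀ x, (fun i' => g i' (Function.update v p x)) =
      Function.update (fun i' => g i' v) i (g i (Function.update v p x)) := by
    intro x; funext i'
    by_cases h : i' = i
    · subst h; simp
    · rw [Function.update_of_ne h, h2 i' h]
  simp only [e]
  exact ⟨fun x y => by rw [(h1 v).map_add, MultilinearMap.map_update_add],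
    fun c x => by rw [(h1 v).map_smul, MultilinearMap.map_update_smul]⟩

lemma IndAt.tp {r : ℕ} {g : Fin r → (Fin m → H) → N} (h2 : ∀ i', IndAt p (g i')) :
    IndAt p (fun v => PiTensorProduct.tprod k (fun i => g i v)) := by
  intro v x
  show PiTensorProduct.tprod k _ = PiTensorProduct.tprod k _
  congr 1; funext i; exact h2 i v x

lemma LinAt.gen {r : ℕ} {E : (Fin m → H) → M} {g : Fin r → (Fin m → H) → N}
    (h : (LinAt k p E ∧ ∀ i, IndAt p (g i)) ∨
      (IndAt p E ∧ ∃ i, LinAt k p (g i) ∧ ∀ i', i' ≠ i → IndAt p (g i'))) :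
    LinAt k p (fun v => E v ⊗ₜ[k] PiTensorProduct.tprod k (fun i => g i v)) := by
  rcases h with ⟨h1, h2⟩ | ⟨h1, i, h2, h3⟩
  · exact LinAt.left h1 (IndAt.tp h2) (TensorProduct.mk k _ _)
  · exact LinAt.right h1 (LinAt.tp i h2 h3) (TensorProduct.mk k _ _)

end coords


variable (k A) in
/-- The projection onto `A / k·1`. -/
abbrev qm : A →ₗ[k] A ⧸ (Submodule.span k {(1 : A)}) := (Submodule.span k {(1 : A)}).mkQ

lemma qm_lin {m : ℕ} {p : Fin m} (q : Fin m) (h : q.val = p.val) (b : A) :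
    LinAt k p (fun v => qm k A (σ (v q) b)) :=
  LinAt.app (φ := fun x => qm k A (σ x b)) (lin_map _ (lin_app σ lin_id b)) q h

lemma s_lin {m : ℕ} {p : Fin m} (q : Fin m) (h : q.val = p.val) (b : A) :
    LinAt k p (fun v => σ (v q) b) :=
  LinAt.app (φ := fun x => σ x b) (lin_app σ lin_id b) q h

lemma s_ind {m : ℕ} {p : Fin m} (q : Fin m) (h : q.val ≠ p.val) (b : A) :
    IndAt p (fun v => σ (v q) b) :=
  IndAt.app (fun x => σ x b) q h

lemma qm_ind {m : ℕ} {p : Fin m} (q : Fin m) (h : q.val ≠ p.val) (b : A) :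
    IndAt p (fun v => qm k A (σ (v q) b)) :=
  IndAt.app (fun x => qm k A (σ x b)) q h

lemma E0_lin {r : ℕ} {p : Fin (r + 2)} (X : A ⊗[k] H) (h : p.val = 0 ∨ p.val = r + 1) :
    LinAt k p (fun v => crossedMul k A H σ f
      (crossedMul k A H σ f (gam k A H (v (Fin.last (r + 1)))) X) (gammaInv k A H finv (v 0))) := by
  rcases h with h | h
  · exact LinAt.right
      (IndAt.app (fun y => crossedMul k A H σ f (gam k A H y) X) (Fin.last _) (by simp; omega))
      (LinAt.app (φ := fun y => gammaInv k A H finv y) (lin_map _ lin_id) 0 (by simp; omega)) _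
  · exact LinAt.left
      (LinAt.app (φ := fun y => crossedMul k A H σ f (gam k A H y) X)
        (lin_app _ (lin_map _ lin_id) X) (Fin.last _) (by simp; omega))
      (IndAt.app (fun y => gammaInv k A H finv y) 0 (by simp; omega)) _

lemma E0_ind {r : ℕ} {p : Fin (r + 2)} (X : A ⊗[k] H) (h : p.val ≠ 0) (h' : p.val ≠ r + 1) :
    IndAt p (fun v => crossedMul k A H σ f
      (crossedMul k A H σ f (gam k A H (v (Fin.last (r + 1)))) X) (gammaInv k A H finv (v 0))) :=
  IndAt.comp₂ 
      (IndAt.app (fun y => crossedMul k A H σ f (gam k A H y) X) (Fin.last _) (by simp; omega))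
      (IndAt.app (fun y => gammaInv k A H finv y) 0 (by simp; omega))
      (fun a b => crossedMul k A H σ f a b)

lemma pull1 (h : H) (u : A ⊗[k] H) (F : H → H → A ⊗[k] H) {r : ℕ}
    (w : ⨂[k]^r (A ⧸ (Submodule.span k {(1 : A)}))) :
    DD n c₁ c₂ h (fun x y => crossedMul k A H σ f u (F x y) ⊗ₜ[k] w) =
      crossedMul k A H σ f u (DD n c₁ c₂ h F) ⊗ₜ[k] w :=
  (map_DD (((TensorProduct.mk k _ _).flip w) ∘ₗ crossedMul k A H σ f u) h F).symm

lemma pull3 (h : H) (u u' : A ⊗[k] H) (F : H → H → A ⊗[k] H) {r : ℕ}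
    (w : ⨂[k]^r (A ⧸ (Submodule.span k {(1 : A)}))) :
    DD n c₁ c₂ h (fun x y => crossedMul k A H σ f (crossedMul k A H σ f (F x y) u) u' ⊗ₜ[k] w) =
      crossedMul k A H σ f (crossedMul k A H σ f (DD n c₁ c₂ h F) u) u' ⊗ₜ[k] w :=
  (map_DD (((TensorProduct.mk k _ _).flip w) ∘ₗ ((crossedMul k A H σ f).flip u') ∘ₗ
    ((crossedMul k A H σ f).flip u)) h F).symm

lemma pull2 {r : ℕ} (j : Fin r) (h : H) (u : A ⊗[k] H) (F : H → H → A)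
    (g : Fin r → A ⧸ (Submodule.span k {(1 : A)})) :
    DD n c₁ c₂ h (fun x y => u ⊗ₜ[k]
      PiTensorProduct.tprod k (Function.update g j (qm k A (F x y)))) =
      u ⊗ₜ[k] PiTensorProduct.tprod k (Function.update g j (qm k A (DD n c₁ c₂ h F))) :=
  (lin_map_DD (f := fun z => u ⊗ₜ[k] PiTensorProduct.tprod k (Function.update g j (qm k A z)))
    (lin_tmul_r (f := fun z => PiTensorProduct.tprod k (Function.update g j (qm k A z)))
      ⟨fun x y => by rw [map_add, MultilinearMap.map_update_add],
        fun c x => by rw [map_smul, MultilinearMap.map_update_smul]⟩ _) h F).symm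

lemma T1 (hrep : IsSweedlerRep k H n c₁ c₂) (hnormal : IsNormal k A H f)
    (hweak : IsWeakAction k A H n c₁ c₂ σ) (htwisted : IsTwistedModule k A H n c₁ c₂ σ f)
    (hinv : IsConvInverse k A H n c₁ c₂ f finv) (r : ℕ) (h : H) (X : A ⊗[k] H)
    (a : Fin (r + 1) → A) :
    swSum (H := H) n c₁ c₂ (r + 2) h (fun v : Fin (r + 3) → H =>
      (crossedMul k A H σ f (crossedMul k A H σ f
        (crossedMul k A H σ f (gam k A H (v (Fin.last (r + 2)))) X) (gammaInv k A H finv (v 0)))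
        (σ (v (0 : Fin (r + 1)).succ.castSucc) (a 0) ⊗ₜ[k] (1 : H))) ⊗ₜ[k]
      (PiTensorProduct.tprod k fun i : Fin r => qm k A (σ (v i.succ.succ.castSucc) (a i.succ)))) =
    swSum (H := H) n c₁ c₂ (r + 1) h (fun v : Fin (r + 2) → H =>
      (crossedMul k A H σ f
        (crossedMul k A H σ f (gam k A H (v (Fin.last (r + 1))))
          (crossedMul k A H σ f X (a 0 ⊗ₜ[k] (1 : H)))) (gammaInv k A H finv (v 0))) ⊗ₜ[k]
      (PiTensorProduct.tprod k fun i : Fin r => qm k A (σ (v i.succ.castSucc) (a i.succ)))) := by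
  rw [swSum_merge hrep (r + 1) 0]
  · refine swSum_congr _ _ fun v => ?_
    have e1 : ∀ x y, splt 0 v x y (Fin.last (r + 2)) = v (Fin.last (r + 1)) :=
      fun x y => splt_gt _ (by simp) (by simp)
    have e2 : ∀ x y, splt 0 v x y 0 = x := fun x y => splt_eq (by simp)
    have e3 : ∀ x y, splt 0 v x y (0 : Fin (r + 1)).succ.castSucc = y :=
      fun x y => splt_eq1 (by simp)
    have e4 : ∀ x y (i : Fin r), splt 0 v x y i.succ.succ.castSucc = v i.succ.castSucc :=
      fun x y i => splt_gt _ (by simp) (by simp)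
    simp only [e1, e2, e3, e4]
    simp only [assoc_EEA hrep hnormal hweak htwisted]
    refine Eq.trans (pull1 (v 0) _ (fun x y => crossedMul k A H σ f (gammaInv k A H finv x)
      (σ y (a 0) ⊗ₜ 1)) _) ?_
    rw [gi_A hrep hnormal hweak htwisted hinv,
      ← assoc_EAE hrep hnormal hweak, assoc_EEA hrep hnormal hweak htwisted]
  · intro p
    refine LinAt.gen (g := fun i v => qm k A (σ (v i.succ.succ.castSucc) (a i.succ))) ?_
    by_cases hp : p.val = 0 ∨ p.val = r + 2
    · left
      refine ⟨LinAt.left (E0_lin X hp) ((s_ind _ (by simp; omega) _).comp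
        (fun z => z ⊗ₜ[k] (1 : H))) _, fun i => qm_ind _ (by simp; omega) _⟩
    by_cases hp1 : p.val = 1
    · left
      refine ⟨LinAt.right (E0_ind X (by omega) (by omega)) ((s_lin _ (by simp; omega) _).comp
        ((TensorProduct.mk k A H).flip 1)) _, fun i => qm_ind _ (by simp; omega) _⟩
    · right
      refine ⟨IndAt.comp₂ (E0_ind X (by omega) (by omega)) ((s_ind _ (by simp; omega) _).comp
        (fun z => z ⊗ₜ[k] (1 : H))) (fun a b => crossedMul k A H σ f a b),
        ⟨p.val - 2, by omega⟩, qm_lin _ (by simp; omega) _, fun i hi => qm_ind _ ?_ _⟩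
      intro e
      apply hi
      apply Fin.ext
      simp at e ⊢
      omega

lemma T3 (hrep : IsSweedlerRep k H n c₁ c₂) (hnormal : IsNormal k A H f)
    (hweak : IsWeakAction k A H n c₁ c₂ σ) (r : ℕ) (h : H) (X : A ⊗[k] H)
    (a : Fin (r + 1) → A) :
    swSum (H := H) n c₁ c₂ (r + 2) h (fun v : Fin (r + 3) → H =>
      (crossedMul k A H σ f (σ (v (Fin.last r).succ.castSucc) (a (Fin.last r)) ⊗ₜ[k] (1 : H))
       (crossedMul k A H σ f
        (crossedMul k A H σ f (gam k A H (v (Fin.last (r + 2)))) X) (gammaInv k A H finv (v 0)))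
        ) ⊗ₜ[k]
      (PiTensorProduct.tprod k fun i : Fin r =>
        qm k A (σ (v i.castSucc.succ.castSucc) (a i.castSucc)))) =
    swSum (H := H) n c₁ c₂ (r + 1) h (fun v : Fin (r + 2) → H =>
      (crossedMul k A H σ f
        (crossedMul k A H σ f (gam k A H (v (Fin.last (r + 1))))
          (crossedMul k A H σ f (a (Fin.last r) ⊗ₜ[k] (1 : H)) X)) (gammaInv k A H finv (v 0))) ⊗ₜ[k]
      (PiTensorProduct.tprod k fun i : Fin r => qm k A (σ (v i.succ.castSucc) (a i.castSucc)))) := by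
  rw [swSum_merge hrep (r + 1) (Fin.last (r + 1))]
  · refine swSum_congr _ _ fun v => ?_
    have e1 : ∀ x y, splt (Fin.last (r + 1)) v x y (Fin.last (r + 2)) = y :=
      fun x y => splt_eq1 (by simp)
    have e2 : ∀ x y, splt (Fin.last (r + 1)) v x y 0 = v 0 := fun x y => splt_lt _ (by simp) (by simp)
    have e3 : ∀ x y, splt (Fin.last (r + 1)) v x y (Fin.last r).succ.castSucc = x :=
      fun x y => splt_eq (by simp)
    have e4 : ∀ x y (i : Fin r), splt (Fin.last (r + 1)) v x y i.castSucc.succ.castSucc =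
        v i.succ.castSucc :=
      fun x y i => splt_lt _ (by simp) (by simp)
    simp only [e1, e2, e3, e4]
    simp only [← assoc_AEE hrep hnormal hweak]
    refine Eq.trans (pull3 (v (Fin.last (r + 1))) _ _ (fun x y => crossedMul k A H σ f
      (σ x (a (Fin.last r)) ⊗ₜ 1) (gam k A H y)) _) ?_
    rw [gam_A hrep hnormal hweak,
      assoc_EAE hrep hnormal hweak]
  · intro p
    refine LinAt.gen (g := fun i v => qm k A (σ (v i.castSucc.succ.castSucc) (a i.castSucc))) ?_
    by_cases hp : p.val = 0 ∨ p.val = r + 2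
    · left
      refine ⟨LinAt.right ((s_ind _ (by simp; omega) _).comp
        (fun z => z ⊗ₜ[k] (1 : H))) (E0_lin X hp) _, fun i => qm_ind _ (by simp; omega) _⟩
    by_cases hp1 : p.val = r + 1
    · left
      refine ⟨LinAt.left ((s_lin _ (by simp; omega) _).comp
        ((TensorProduct.mk k A H).flip 1)) (E0_ind X (by omega) (by omega)) _,
        fun i => qm_ind _ (by simp; omega) _⟩
    · right
      refine ⟨IndAt.comp₂ ((s_ind _ (by simp; omega) _).comp
        (fun z => z ⊗ₜ[k] (1 : H))) (E0_ind X (by omega) (by omega))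
        (fun a b => crossedMul k A H σ f a b),
        ⟨p.val - 1, by omega⟩, qm_lin _ (by simp; omega) _, fun i hi => qm_ind _ ?_ _⟩
      intro e
      apply hi
      apply Fin.ext
      simp at e ⊢
      omega

lemma T2 (hrep : IsSweedlerRep k H n c₁ c₂)
    (hweak : IsWeakAction k A H n c₁ c₂ σ) (r : ℕ) (h : H) (X : A ⊗[k] H)
    (a : Fin (r + 1) → A) (j : Fin r) (aj : Fin r → A)
    (haj : ∀ m : Fin r, aj m = if (m : ℕ) < (j : ℕ) then a m.castSucc
      else if (m : ℕ) = (j : ℕ) then a j.castSucc * a j.succ else a m.succ) :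
    swSum (H := H) n c₁ c₂ (r + 2) h (fun v : Fin (r + 3) → H =>
      (crossedMul k A H σ f
        (crossedMul k A H σ f (gam k A H (v (Fin.last (r + 2)))) X) (gammaInv k A H finv (v 0)))
        ⊗ₜ[k]
      (PiTensorProduct.tprod k fun m : Fin r =>
        if (m : ℕ) < (j : ℕ) then qm k A (σ (v m.castSucc.succ.castSucc) (a m.castSucc))
        else if (m : ℕ) = (j : ℕ) then
          qm k A (σ (v j.castSucc.succ.castSucc) (a j.castSucc) *
            σ (v j.succ.succ.castSucc) (a j.succ))
        else qm k A (σ (v m.succ.succ.castSucc) (a m.succ)))) =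
    swSum (H := H) n c₁ c₂ (r + 1) h (fun v : Fin (r + 2) → H =>
      (crossedMul k A H σ f
        (crossedMul k A H σ f (gam k A H (v (Fin.last (r + 1)))) X) (gammaInv k A H finv (v 0)))
        ⊗ₜ[k]
      (PiTensorProduct.tprod k fun i : Fin r => qm k A (σ (v i.succ.castSucc) (aj i)))) := by
  have hj := j.isLt
  rw [swSum_merge hrep (r + 1) j.succ.castSucc]
  · refine swSum_congr _ _ fun v => ?_
    have e1 : ∀ x y, splt j.succ.castSucc v x y (Fin.last (r + 2)) = v (Fin.last (r + 1)) :=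
      fun x y => splt_gt _ (by simp) (by simp)
    have e2 : ∀ x y, splt j.succ.castSucc v x y 0 = v 0 := fun x y => splt_lt _ (by simp) (by simp)
    have e4 : ∀ x y, (fun m : Fin r =>
        if (m : ℕ) < (j : ℕ) then
          qm k A (σ (splt j.succ.castSucc v x y m.castSucc.succ.castSucc) (a m.castSucc))
        else if (m : ℕ) = (j : ℕ) then
          qm k A (σ (splt j.succ.castSucc v x y j.castSucc.succ.castSucc) (a j.castSucc) *
            σ (splt j.succ.castSucc v x y j.succ.succ.castSucc) (a j.succ))
        else qm k A (σ (splt j.succ.castSucc v x y m.succ.succ.castSucc) (a m.succ))) =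
        Function.update (fun m : Fin r => qm k A (σ (v m.succ.castSucc) (aj m))) j
          (qm k A (σ x (a j.castSucc) * σ y (a j.succ))) := by
      intro x y
      funext m
      rcases lt_trichotomy m.val j.val with hm | hm | hm
      · rw [Function.update_of_ne (by rintro rfl; omega), haj, if_pos hm, if_pos hm,
          splt_lt m.succ.castSucc (by simpa using hm) (by simp)]
      · obtain rfl : m = j := Fin.ext hm
        rw [Function.update_self, if_neg (by omega), if_pos rfl, splt_eq (by simp),
          splt_eq1 (by simp)]
      · rw [Function.update_of_ne (by rintro rfl; omega), haj, if_neg (by omega),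
          if_neg (by omega), if_neg (by omega), if_neg (by omega),
          splt_gt m.succ.castSucc (by simpa using hm) (by simp)]
    simp only [e1, e2, e4]
    refine Eq.trans (pull2 j (v j.succ.castSucc) _
      (fun x y => σ x (a j.castSucc) * σ y (a j.succ)) _) ?_
    rw [← weak_mul hweak]
    congr 2
    funext m
    by_cases hm : m = j
    · subst hm
      rw [Function.update_self, haj, if_neg (by omega), if_pos rfl]
    · rw [Function.update_of_ne hm]
  · intro p
    refine LinAt.gen (g := fun m v => if (m : ℕ) < (j : ℕ) then
        qm k A (σ (v m.castSucc.succ.castSucc) (a m.castSucc))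
        else if (m : ℕ) = (j : ℕ) then
          qm k A (σ (v j.castSucc.succ.castSucc) (a j.castSucc) *
            σ (v j.succ.succ.castSucc) (a j.succ))
        else qm k A (σ (v m.succ.succ.castSucc) (a m.succ))) ?_
    have hind : ∀ m : Fin r, (m.val < j.val → p.val ≠ m.val + 1) →
        (m.val = j.val → p.val ≠ m.val + 1 ∧ p.val ≠ m.val + 2) →
        (j.val < m.val → p.val ≠ m.val + 2) →
        IndAt p (fun v : Fin (r + 3) → H => if (m : ℕ) < (j : ℕ) then
        qm k A (σ (v m.castSucc.succ.castSucc) (a m.castSucc))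
        else if (m : ℕ) = (j : ℕ) then
          qm k A (σ (v j.castSucc.succ.castSucc) (a j.castSucc) *
            σ (v j.succ.succ.castSucc) (a j.succ))
        else qm k A (σ (v m.succ.succ.castSucc) (a m.succ))) := by
      intro m h1 h2 h3
      rcases lt_trichotomy m.val j.val with hm | hm | hm
      · simp only [if_pos hm]
        exact qm_ind _ (by simp; omega) _
      · simp only [if_neg (lt_irrefl _), hm, if_true]
        exact IndAt.comp₂ (s_ind _ (by simp; omega) _) (s_ind _ (by simp; omega) _)
          (fun x y => qm k A (x * y))
      · simp only [if_neg (show ¬ m.val < j.val by omega), if_neg (show ¬ m.val = j.val by omega)]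
        exact qm_ind _ (by simp; omega) _
    by_cases hp : p.val = 0 ∨ p.val = r + 2
    · left
      exact ⟨E0_lin X hp, fun m => hind m (by omega) (by omega) (by omega)⟩
    · right
      refine ⟨E0_ind X (by omega) (by omega), ?_⟩
      by_cases h1 : p.val ≤ j.val
      · refine ⟨⟨p.val - 1, by omega⟩, ?_, fun m hm => ?_⟩
        · simp only [if_pos (show p.val - 1 < j.val by omega)]
          exact qm_lin _ (by simp; omega) _
        · have hm' : m.val ≠ p.val - 1 := fun e => hm (Fin.ext e)
          exact hind m (by omega) (by omega) (by omega)
      by_cases h2 : p.val = j.val + 1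
      · refine ⟨j, ?_, fun m hm => ?_⟩
        · simp only [if_neg (lt_irrefl _), if_true]
          exact LinAt.comp (LinAt.left (s_lin _ (by simp; omega) _) (s_ind _ (by simp; omega) _)
            (LinearMap.mul k A)) (qm k A)
        · have hm' : m.val ≠ j.val := fun e => hm (Fin.ext e)
          exact hind m (by omega) (by omega) (by omega)
      by_cases h3 : p.val = j.val + 2
      · refine ⟨j, ?_, fun m hm => ?_⟩
        · simp only [if_neg (lt_irrefl _), if_true]
          exact LinAt.comp (LinAt.right (s_ind _ (by simp; omega) _) (s_lin _ (by simp; omega) _)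
            (LinearMap.mul k A)) (qm k A)
        · have hm' : m.val ≠ j.val := fun e => hm (Fin.ext e)
          exact hind m (by omega) (by omega) (by omega)
      · refine ⟨⟨p.val - 2, by omega⟩, ?_, fun m hm => ?_⟩
        · simp only [if_neg (show ¬ p.val - 2 < j.val by omega),
            if_neg (show ¬ p.val - 2 = j.val by omega)]
          exact qm_lin _ (by simp; omega) _
        · have hm' : m.val ≠ p.val - 2 := fun e => hm (Fin.ext e)
          exact hind m (by omega) (by omega) (by omega)

end Helpers

/-- For each `h ∈ H` the formula
`ϑ^h(x ⊗ ā₁ ⊗ ⋯ ⊗ ā_r) = γ(h⁽³⁾) x γ⁻¹(h⁽¹⁾) ⊗ (a₁ ⊗ ⋯ ⊗ a_r)^{h⁽²⁾}`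
defines a well-defined `k`-linear endomorphism of the Hochschild complex
`(E ⊗ Ā^{⊗*}, b)` which is a morphism of complexes: `b ∘ ϑ^h = ϑ^h ∘ b`. -/
theorem theta_chain_map
    (σ : H →ₗ[k] A →ₗ[k] A) (f finv : H →ₗ[k] H →ₗ[k] A)
    (n : H → ℕ) (c₁ c₂ : H → ℕ → H)
    (hrep : IsSweedlerRep k H n c₁ c₂)
    (hweak : IsWeakAction k A H n c₁ c₂ σ)
    (hnormal : IsNormal k A H f)
    (hcocycle : IsCocycle k A H n c₁ c₂ σ f)
    (htwisted : IsTwistedModule k A H n c₁ c₂ σ f)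
    (hinv : IsConvInverse k A H n c₁ c₂ f finv)
    -- the Hochschild boundary map of `A` with coefficients in `E`:
    (bd : ∀ r : ℕ, HochM k A H (r + 1) →ₗ[k] HochM k A H r)
    (hbd : ∀ (r : ℕ) (x : A ⊗[k] H) (a : Fin (r + 1) → A),
      bd r (x ⊗ₜ[k]
          (PiTensorProduct.tprod k fun i : Fin (r + 1) =>
            (Submodule.span k {(1 : A)}).mkQ (a i))) =
        (crossedMul k A H σ f x ((a 0) ⊗ₜ[k] (1 : H))) ⊗ₜ[k]
            (PiTensorProduct.tprod k fun i : Fin r =>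
              (Submodule.span k {(1 : A)}).mkQ (a i.succ))
          + (∑ j : Fin r, ((-1 : k) ^ ((j : ℕ) + 1)) •
              (x ⊗ₜ[k] (PiTensorProduct.tprod k fun m : Fin r =>
                if (m : ℕ) < (j : ℕ) then (Submodule.span k {(1 : A)}).mkQ (a m.castSucc)
                else if (m : ℕ) = (j : ℕ) then
                  (Submodule.span k {(1 : A)}).mkQ (a j.castSucc * a j.succ)
                else (Submodule.span k {(1 : A)}).mkQ (a m.succ))))
          + ((-1 : k) ^ (r + 1)) •
              ((crossedMul k A H σ f ((a (Fin.last r)) ⊗ₜ[k] (1 : H)) x) ⊗ₜ[k]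
                (PiTensorProduct.tprod k fun i : Fin r =>
                  (Submodule.span k {(1 : A)}).mkQ (a i.castSucc)))) :
    ∀ h : H, ∃ theta : ∀ r : ℕ, HochM k A H r →ₗ[k] HochM k A H r,
      (∀ (r : ℕ) (x : A ⊗[k] H) (a : Fin r → A),
        theta r (x ⊗ₜ[k]
            (PiTensorProduct.tprod k fun i : Fin r =>
              (Submodule.span k {(1 : A)}).mkQ (a i))) =
          swSum (H := H) n c₁ c₂ (r + 1) h (fun v : Fin (r + 2) → H =>
            (crossedMul k A H σ f
                (crossedMul k A H σ f (gam k A H (v (Fin.last (r + 1)))) x)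
                (gammaInv k A H finv (v 0))) ⊗ₜ[k]
              (PiTensorProduct.tprod k fun i : Fin r =>
                (Submodule.span k {(1 : A)}).mkQ (σ (v i.succ.castSucc) (a i))))) ∧
      (∀ r : ℕ, (bd r) ∘ₗ (theta (r + 1)) = (theta r) ∘ₗ (bd r)) := by
  intro h
  have hmem : ∀ g : H, Submodule.span k {(1 : A)} ≤ (Submodule.span k {(1 : A)}).comap (σ g) := by
    intro g
    rw [Submodule.span_le]
    rintro _ rfl
    show σ g 1 ∈ Submodule.span k {(1 : A)}
    rw [hweak.2.1]
    exact Submodule.smul_mem _ _ (Submodule.mem_span_singleton_self _)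
  let sbar : H → ((A ⧸ (Submodule.span k {(1 : A)})) →ₗ[k] (A ⧸ (Submodule.span k {(1 : A)}))) :=
    fun g => Submodule.mapQ _ _ (σ g) (hmem g)
  let theta : ∀ r : ℕ, HochM k A H r →ₗ[k] HochM k A H r := fun r =>
    swSum (H := H) n c₁ c₂ (r + 1) h (fun v : Fin (r + 2) → H =>
      TensorProduct.map
        (((crossedMul k A H σ f).flip (gammaInv k A H finv (v 0))) ∘ₗ
          (crossedMul k A H σ f (gam k A H (v (Fin.last (r + 1))))))
        (PiTensorProduct.map (fun i : Fin r => sbar (v i.succ.castSucc))))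
  have P1 : ∀ (r : ℕ) (x : A ⊗[k] H) (a : Fin r → A),
        theta r (x ⊗ₜ[k]
            (PiTensorProduct.tprod k fun i : Fin r =>
              (Submodule.span k {(1 : A)}).mkQ (a i))) =
          swSum (H := H) n c₁ c₂ (r + 1) h (fun v : Fin (r + 2) → H =>
            (crossedMul k A H σ f
                (crossedMul k A H σ f (gam k A H (v (Fin.last (r + 1)))) x)
                (gammaInv k A H finv (v 0))) ⊗ₜ[k]
              (PiTensorProduct.tprod k fun i : Fin r =>
                (Submodule.span k {(1 : A)}).mkQ (σ (v i.succ.castSucc) (a i)))) := by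
    intro r x a
    refine Eq.trans (swSum_map (LinearMap.applyₗ (x ⊗ₜ[k]
            (PiTensorProduct.tprod k fun i : Fin r =>
              (Submodule.span k {(1 : A)}).mkQ (a i)))) _ _ _) ?_
    refine swSum_congr _ _ fun v => ?_
    simp only [LinearMap.applyₗ_apply_apply, TensorProduct.map_tmul, PiTensorProduct.map_tprod]
    rfl
  refine ⟨theta, P1, fun r => ?_⟩
  refine TensorProduct.ext' fun x t => ?_
  induction t using PiTensorProduct.induction_on with
  | add t t' h1 h2 => rw [TensorProduct.tmul_add, map_add, map_add, h1, h2]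
  | smul_tprod c q =>
  rw [TensorProduct.tmul_smul, map_smul, map_smul]
  congr 1
  obtain ⟨a, rfl⟩ : ∃ a : Fin (r + 1) → A,
      q = fun i => (Submodule.span k {(1 : A)}).mkQ (a i) := by
    choose a ha using fun i => Submodule.mkQ_surjective (Submodule.span k {(1 : A)}) (q i)
    exact ⟨a, funext fun i => (ha i).symm⟩
  let aj : Fin r → Fin r → A := fun j m => if (m : ℕ) < (j : ℕ) then a m.castSucc
      else if (m : ℕ) = (j : ℕ) then a j.castSucc * a j.succ else a m.succ
  have haj : ∀ j : Fin r, (fun m : Fin r =>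
      if (m : ℕ) < (j : ℕ) then (Submodule.span k {(1 : A)}).mkQ (a m.castSucc)
                else if (m : ℕ) = (j : ℕ) then
                  (Submodule.span k {(1 : A)}).mkQ (a j.castSucc * a j.succ)
                else (Submodule.span k {(1 : A)}).mkQ (a m.succ)) =
      fun m => (Submodule.span k {(1 : A)}).mkQ (aj j m) := by
    intro j
    funext m
    simp only [aj]
    split_ifs <;> rfl
  rw [LinearMap.comp_apply, LinearMap.comp_apply, P1, hbd]
  simp only [haj, map_add, map_sum, map_smul, P1]
  rw [← T1 hrep hnormal hweak htwisted hinv, ← T3 hrep hnormal hweak]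
  have e2 := fun j : Fin r => (T2 (f := f) (finv := finv) hrep hweak r h x a j (aj j) (fun m => rfl)).symm
  rw [Finset.sum_congr rfl fun (j : Fin r) _ => congrArg (fun z => ((-1 : k) ^ ((j : ℕ) + 1)) • z) (e2 j)]
  refine Eq.trans (swSum_map (bd r) _ _ _) ?_
  simp only [hbd]
  rw [← swSum_smul, ← Finset.sum_congr rfl fun (j : Fin r) _ => swSum_smul _ _ _ _, ← swSum_sum, ← swSum_add,
    ← swSum_add]

end Statement12
end
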